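/- arXiv:2001.00410 — 3 statements merged into one kernel-verified Lean document; each statement's English description precedes it below -/
import Mathlib

section
/- Let n ≥ 1 and let f : ℝⁿ → ℝ be a nonnegative, continuous, compactly supported function with ∫_{ℝⁿ} f dx = 1, and let u(t,x) = ∫_{ℝⁿ} (4πt)^{-n/2} exp(-‖x-y‖²/(4t)) f(y) dy. Then for every t > 0 the entropy H(u(t)) = -∫ u log u dx is twice differentiable in t and (d²/dt²) H(u(t)) = -2 ∫_{ℝⁿ} ‖∇² log u(t,x)‖²_{HS} u(t,x) dx, where ∇² log u is the Hessian matrix of log u in x and ‖·‖_{HS} is its Hilbert–Schmidt (Frobenius) norm. -/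
open Real MeasureTheory

/-- The heat semigroup solution on `ℝⁿ` with initial datum `f`. -/
noncomputable def heatSol (n : ℕ) (f : EuclideanSpace ℝ (Fin n) → ℝ)
    (t : ℝ) (x : EuclideanSpace ℝ (Fin n)) : ℝ :=
  ∫ y, (4 * π * t) ^ (-(n : ℝ) / 2) * Real.exp (-‖x - y‖ ^ 2 / (4 * t)) * f y

/-- The Boltzmann–Shannon entropy of the heat solution at time `t`. -/
noncomputable def shannonEntropy (n : ℕ) (f : EuclideanSpace ℝ (Fin n) → ℝ) (t : ℝ) : ℝ :=
  -∫ x, heatSol n f t x * Real.log (heatSol n f t x)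

/-- The Hessian matrix of a function on `ℝⁿ`. -/
noncomputable def hessianMatrix (n : ℕ) (g : EuclideanSpace ℝ (Fin n) → ℝ)
    (x : EuclideanSpace ℝ (Fin n)) : Matrix (Fin n) (Fin n) ℝ :=
  fun i j => iteratedFDeriv ℝ 2 g x ![EuclideanSpace.single i 1, EuclideanSpace.single j 1]

/-- The squared Hilbert–Schmidt (Frobenius) norm of the Hessian of a function on `ℝⁿ`. -/
noncomputable def hessianHSsq (n : ℕ) (g : EuclideanSpace ℝ (Fin n) → ℝ)
    (x : EuclideanSpace ℝ (Fin n)) : ℝ :=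
  ∑ i, ∑ j, (hessianMatrix n g x i j) ^ 2

namespace HeatEnt

open MvPolynomial

/-- Polynomials in `s = 1/(2t)` (variable `none`) and the coordinates. -/
abbrev Pol (n : ℕ) := MvPolynomial (Option (Fin n)) ℝ

/-- The space. -/
abbrev Eu (n : ℕ) := EuclideanSpace ℝ (Fin n)

/-- evaluation point -/
noncomputable def pt {n : ℕ} (t : ℝ) (z : Eu n) : Option (Fin n) → ℝ :=
  fun o => o.elim (1 / (2 * t)) (fun i => z i)

/-- heat kernel -/
noncomputable def Gk (n : ℕ) (t : ℝ) (z : Eu n) : ℝ :=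
  (4 * π * t) ^ (-(n : ℝ) / 2) * Real.exp (-‖z‖ ^ 2 / (4 * t))

/-- polynomial times heat kernel -/
noncomputable def kap {n : ℕ} (P : Pol n) (t : ℝ) (z : Eu n) : ℝ :=
  eval (pt t z) P * Gk n t z

/-- spatial derivative on polynomials -/
noncomputable def Dp {n : ℕ} (i : Fin n) (P : Pol n) : Pol n :=
  pderiv (some i) P - X none * X (some i) * P

/-- the polynomial of `∂ₜ G / G` -/
noncomputable def qp (n : ℕ) : Pol n :=
  X none ^ 2 * (∑ i : Fin n, X (some i) ^ 2) - (n : Pol n) * X none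

/-- time derivative on polynomials -/
noncomputable def Tp {n : ℕ} (P : Pol n) : Pol n :=
  P * qp n - 2 * X none ^ 2 * pderiv none P

lemma pderiv_comm' {σ : Type*} (i j : σ) (P : MvPolynomial σ ℝ) :
    pderiv i (pderiv j P) = pderiv j (pderiv i P) := by
  classical
  induction P using MvPolynomial.induction_on with
  | C a => simp
  | add p q hp hq => simp [hp, hq]
  | mul_X p k hp =>
    simp only [pderiv_mul, map_add, hp, pderiv_X, Pi.single_apply]
    split_ifs <;> simp <;> ring

lemma Dp_comm {n : ℕ} (i j : Fin n) (P : Pol n) : Dp i (Dp j P) = Dp j (Dp i P) := by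
  by_cases h : i = j
  · rw [h]
  have h1 : pderiv (some i) (X (some j) : Pol n) = 0 := pderiv_X_of_ne (by simpa using Ne.symm h)
  have h2 : pderiv (some j) (X (some i) : Pol n) = 0 := pderiv_X_of_ne (by simpa using h)
  have h3 (i : Fin n) : pderiv (some i) (X none : Pol n) = 0 := pderiv_X_of_ne (by simp)
  simp only [Dp, map_sub, pderiv_mul, h1, h2, h3, pderiv_comm' (some i) (some j)]
  ring

lemma pderiv_qp {n : ℕ} (i : Fin n) :
    pderiv (some i) (qp n) = 2 * X none ^ 2 * X (some i) := by
  classical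
  have h3 (i : Fin n) : pderiv (some i) (X none : Pol n) = 0 := pderiv_X_of_ne (by simp)
  simp only [qp, map_sub, pderiv_mul, pderiv_pow, h3, map_sum, Derivation.map_natCast]
  have : ∀ x : Fin n, ((2 : ℕ) : Pol n) * (X (some x) : Pol n) ^ (2 - 1) * pderiv (some i) (X (some x))
      = if x = i then 2 * X (some i) else 0 := by
    intro x
    split_ifs with h
    · subst h; simp
    · rw [pderiv_X_of_ne (by simpa using h)]; simp
  rw [Finset.sum_congr rfl (fun x _ => this x)]
  simp
  ring

lemma Tp_Dp {n : ℕ} (i : Fin n) (P : Pol n) : Tp (Dp i P) = Dp i (Tp P) := by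
  have h3 : pderiv (some i) (X none : Pol n) = 0 := pderiv_X_of_ne (by simp)
  have h4 : pderiv none (X (some i) : Pol n) = 0 := pderiv_X_of_ne (by simp)
  have h5 : pderiv none (X none : Pol n) = 1 := pderiv_X_self _
  have h6 : pderiv (some i) (2 : Pol n) = 0 := by
    have := Derivation.map_natCast (pderiv (R := ℝ) (some i)) 2
    simpa using this
  simp only [Tp, Dp, map_sub, pderiv_mul, pderiv_pow, h3, h4, h5, h6, pderiv_qp,
    pderiv_comm' none (some i)]
  ring

lemma Tp_sum {n : ℕ} {ι : Type*} (s : Finset ι) (P : ι → Pol n) :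
    Tp (∑ i ∈ s, P i) = ∑ i ∈ s, Tp (P i) := by
  simp only [Tp, map_sum, Finset.sum_mul, Finset.mul_sum, Finset.sum_sub_distrib]

lemma Dp_sum {n : ℕ} {ι : Type*} (j : Fin n) (s : Finset ι) (P : ι → Pol n) :
    Dp j (∑ i ∈ s, P i) = ∑ i ∈ s, Dp j (P i) := by
  simp only [Dp, map_sum, Finset.mul_sum, Finset.sum_sub_distrib]

lemma Tp_one {n : ℕ} : Tp (1 : Pol n) = ∑ i, Dp i (Dp i 1) := by
  have h3 (i : Fin n) : pderiv (some i) (X none : Pol n) = 0 := pderiv_X_of_ne (by simp)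
  simp only [Tp, Dp, map_sub, pderiv_mul, h3, pderiv_X_self, pderiv_one]
  have : ∀ i : Fin n, (0 : Pol n) - ((0 * X (some i) + X none * 1) * 1 + X none * X (some i) * 0)
      - X none * X (some i) * (0 - X none * X (some i) * 1)
      = X none ^ 2 * X (some i) ^ 2 - X none := by intro i; ring
  simp only [map_zero]
  rw [Finset.sum_congr rfl (fun i _ => this i), Finset.sum_sub_distrib, ← Finset.mul_sum]
  simp [qp]

lemma Tp_Tp_one {n : ℕ} : Tp (Tp (1 : Pol n)) = ∑ i, Dp i (Dp i (Tp 1)) := by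
  conv_lhs => rw [Tp_one, Tp_sum]
  simp only [Tp_Dp]

/-- chain rule for polynomial evaluation -/
lemma hasFDerivAt_eval {σ H : Type*} [Fintype σ] [NormedAddCommGroup H] [NormedSpace ℝ H]
    (w : H → σ → ℝ) (w' : σ → H →L[ℝ] ℝ) (p : H)
    (hw : ∀ o, HasFDerivAt (fun q => w q o) (w' o) p) (P : MvPolynomial σ ℝ) :
    HasFDerivAt (fun q => eval (w q) P) (∑ o, eval (w p) (pderiv o P) • w' o) p := by
  classical
  induction P using MvPolynomial.induction_on with
  | C a => simpa using hasFDerivAt_const a p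
  | add P Q hP hQ =>
    simp only [map_add, add_smul, Finset.sum_add_distrib]
    exact hP.add hQ
  | mul_X P k hP =>
    simp only [map_mul, eval_X]
    refine (hP.mul (hw k)).congr_fderiv ?_
    simp only [pderiv_mul, map_add, map_mul, eval_X, add_smul, Finset.sum_add_distrib, pderiv_X]
    rw [add_comm]
    congr 1
    · rw [Finset.smul_sum]
      refine Finset.sum_congr rfl fun o _ => ?_
      rw [smul_smul, mul_comm]
    · rw [Finset.sum_eq_single k]
      · simp
      · intro b _ hb; simp [Ne.symm hb]
      · simp

lemma norm_sq_eu {n : ℕ} (z : Eu n) : ‖z‖ ^ 2 = ∑ i, z i ^ 2 := by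
  simp [EuclideanSpace.norm_sq_eq]

lemma hasFDerivAt_coord {n : ℕ} (i : Fin n) (z : Eu n) :
    HasFDerivAt (fun q : Eu n => q i) (EuclideanSpace.proj (𝕜 := ℝ) i : Eu n →L[ℝ] ℝ) z :=
  (EuclideanSpace.proj (𝕜 := ℝ) i : Eu n →L[ℝ] ℝ).hasFDerivAt

lemma kap_fderiv {n : ℕ} (P : Pol n) (t : ℝ) (z : Eu n) :
    HasFDerivAt (fun z => kap P t z)
      (∑ i, kap (Dp i P) t z • (EuclideanSpace.proj (𝕜 := ℝ) i : Eu n →L[ℝ] ℝ)) z := by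
  have h1 := hasFDerivAt_eval (fun q : Eu n => pt t q)
    (fun o => o.elim 0 (fun i => (EuclideanSpace.proj (𝕜 := ℝ) i : Eu n →L[ℝ] ℝ))) z
    (by rintro (_ | i)
        · exact hasFDerivAt_const _ _
        · exact hasFDerivAt_coord i z) P
  have h2 : HasFDerivAt (fun z : Eu n => Gk n t z)
      (∑ i, (-(1 / (2 * t)) * z i * Gk n t z) •
        (EuclideanSpace.proj (𝕜 := ℝ) i : Eu n →L[ℝ] ℝ)) z := by
    simp only [Gk, norm_sq_eu]
    have h3 : HasFDerivAt (fun z : Eu n => ∑ i, z i ^ 2) (∑ i, (2 * z i) •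
        (EuclideanSpace.proj (𝕜 := ℝ) i : Eu n →L[ℝ] ℝ)) z := by
      refine HasFDerivAt.fun_sum fun i _ => ?_
      exact ((hasFDerivAt_coord i z).pow 2).congr_fderiv (by ext; simp)
    have h4 := ((h3.neg.mul_const (4 * t)⁻¹).exp.const_mul ((4 * π * t) ^ (-(n : ℝ) / 2)))
    simp only [div_eq_mul_inv] at h4 ⊢
    refine h4.congr_fderiv ?_
    ext v
    simp [Finset.mul_sum]
    refine Finset.sum_congr rfl fun i _ => ?_
    by_cases ht : t = 0
    · simp [ht]
    · field_simp; ring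
  refine (h1.mul h2).congr_fderiv ?_
  rw [Fintype.sum_option]
  ext v
  simp [kap, Dp, pt, Finset.mul_sum]
  rw [neg_add_eq_sub, ← Finset.sum_sub_distrib]
  exact Finset.sum_congr rfl fun i _ => by ring

lemma kap_tderiv {n : ℕ} (P : Pol n) (t : ℝ) (ht : 0 < t) (z : Eu n) :
    HasDerivAt (fun t => kap P t z) (kap (Tp P) t z) t := by
  have h0 : HasDerivAt (fun q : ℝ => 1 / (2 * q)) (-2 * (1 / (2 * t)) ^ 2) t := by
    have := ((hasDerivAt_id t).const_mul 2).inv (by simp; exact ht.ne')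
    simp only [one_div]
    refine this.congr_deriv ?_
    simp; field_simp
  have h1 := (hasFDerivAt_eval (fun q : ℝ => pt q z)
    (fun o => o.elim (ContinuousLinearMap.toSpanSingleton ℝ (-2 * (1 / (2 * t)) ^ 2)) (fun i => 0)) t
    (by rintro (_ | i)
        · exact h0.hasFDerivAt
        · exact hasFDerivAt_const _ _) P).hasDerivAt
  have h2 : HasDerivAt (fun t : ℝ => Gk n t z)
      (((1 / (2 * t)) ^ 2 * ‖z‖ ^ 2 - n * (1 / (2 * t))) * Gk n t z) t := by
    simp only [Gk]
    have h3 : HasDerivAt (fun t : ℝ => (4 * π * t) ^ (-(n : ℝ) / 2))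
        (-n * (1 / (2 * t)) * (4 * π * t) ^ (-(n : ℝ) / 2)) t := by
      have h5 : (4 * π * t) ≠ 0 := by positivity
      have := ((hasDerivAt_id t).const_mul (4 * π)).rpow_const (p := -(n : ℝ) / 2) (Or.inl h5)
      refine this.congr_deriv ?_
      simp only [id, mul_one]
      rw [Real.rpow_sub_one h5]
      field_simp
    have h4 : HasDerivAt (fun t : ℝ => Real.exp (-‖z‖ ^ 2 / (4 * t)))
        (Real.exp (-‖z‖ ^ 2 / (4 * t)) * ((1 / (2 * t)) ^ 2 * ‖z‖ ^ 2)) t := by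
      have := ((((hasDerivAt_id t).const_mul 4).inv (by simp; exact ht.ne')).const_mul (-‖z‖ ^ 2)).exp
      simp only [div_eq_mul_inv]
      refine this.congr_deriv ?_
      simp; field_simp; norm_num
    refine (h3.mul h4).congr_deriv ?_
    ring
  refine (h1.mul h2).congr_deriv ?_
  rw [Fintype.sum_option]
  simp [kap, Tp, pt, qp, norm_sq_eu]
  ring

lemma kap_cont {n : ℕ} (P : Pol n) (t : ℝ) : Continuous (fun z => kap P t z) :=
  continuous_iff_continuousAt.2 fun z => (kap_fderiv P t z).continuousAt

lemma kap_cont2 {n : ℕ} (P : Pol n) :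
    ContinuousOn (fun p : ℝ × Eu n => kap P p.1 p.2) (Set.Ioi 0 ×ˢ Set.univ) := by
  have hp : ContinuousOn (fun p : ℝ × Eu n => pt p.1 p.2) (Set.Ioi 0 ×ˢ Set.univ) := by
    refine continuousOn_pi.2 ?_
    rintro (_ | i)
    · simp only [pt, Option.elim]
      refine ContinuousOn.div (by fun_prop) (by fun_prop) ?_
      rintro ⟨t, z⟩ ⟨ht, -⟩
      simp at ht ⊢; exact ht.ne'
    · simp only [pt, Option.elim]
      fun_prop
  have h1 : ContinuousOn (fun p : ℝ × Eu n => eval (pt p.1 p.2) P) (Set.Ioi 0 ×ˢ Set.univ) :=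
    (MvPolynomial.continuous_eval P).comp_continuousOn hp
  refine h1.mul ?_
  refine ContinuousOn.mul ?_ (Real.continuous_exp.comp_continuousOn ?_)
  · refine ContinuousOn.rpow_const (by fun_prop) ?_
    rintro ⟨t, z⟩ ⟨ht, -⟩
    simp at ht ⊢; left; exact ht.ne'
  · refine ContinuousOn.div (by fun_prop) (by fun_prop) ?_
    rintro ⟨t, z⟩ ⟨ht, -⟩
    simp at ht ⊢; exact ht.ne'

end HeatEnt


namespace HeatEnt

open MvPolynomial

/-- hypotheses on the datum -/
structure Dat (n : ℕ) (f : Eu n → ℝ) : Prop where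
  cont : Continuous f
  nonneg : ∀ x, 0 ≤ f x
  supp : HasCompactSupport f
  int : ∫ x, f x = 1

/-- integral against kernel -/
noncomputable def In {n : ℕ} (f : Eu n → ℝ) (P : Pol n) (t : ℝ) (x : Eu n) : ℝ :=
  ∫ y, kap P t (x - y) * f y

lemma In_one {n : ℕ} (f : Eu n → ℝ) (t : ℝ) (x : Eu n) : In f 1 t x = heatSol n f t x := by
  simp [In, kap, Gk, heatSol]

lemma diff_under {n : ℕ} {f : Eu n → ℝ} (D : Dat n f) {H : Type*} [NormedAddCommGroup H]
    [NormedSpace ℝ H] (K : H → Eu n → ℝ) (K' : H → Eu n → H →L[ℝ] ℝ) (p : H) (S : Set H)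
    (hS : IsCompact S) (hSp : S ∈ nhds p)
    (hd : ∀ q ∈ S, ∀ y, HasFDerivAt (fun q => K q y) (K' q y) q)
    (hK : ∀ q ∈ S, Continuous (K q))
    (hK' : ContinuousOn (fun q : H × Eu n => K' q.1 q.2) (S ×ˢ Set.univ)) :
    HasFDerivAt (fun q => ∫ y, K q y * f y) (∫ y, f y • K' p y) p := by
  have hpS : p ∈ S := mem_of_mem_nhds hSp
  have hc : IsCompact (S ×ˢ tsupport f) := hS.prod D.supp
  obtain ⟨C, hC⟩ := hc.exists_bound_of_continuousOn
    (hK'.mono (Set.prod_mono le_rfl (Set.subset_univ _)))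
  have hfi : Integrable f := D.cont.integrable_of_hasCompactSupport D.supp
  refine hasFDerivAt_integral_of_dominated_of_fderiv_le (𝕜 := ℝ) (E := ℝ) (μ := volume)
    (F := fun q y => K q y * f y) (F' := fun q y => f y • K' q y) (bound := fun y => C * ‖f y‖) hSp
    ?_ ?_ ?_ ?_ ?_ ?_
  · filter_upwards [hSp] with q hq
    exact ((hK q hq).mul D.cont).aestronglyMeasurable
  · exact ((hK p hpS).mul D.cont).integrable_of_hasCompactSupport D.supp.mul_left
  · haveI : SecondCountableTopologyEither (Eu n) (H →L[ℝ] ℝ) := ⟨Or.inl inferInstance⟩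
    refine (D.cont.smul ?_).aestronglyMeasurable
    have : ContinuousOn (fun y : Eu n => K' p y) Set.univ :=
      hK'.comp (f := fun y : Eu n => (p, y)) (by fun_prop) (fun y _ => ⟨hpS, trivial⟩)
    exact continuousOn_univ.1 this
  · refine Filter.Eventually.of_forall fun y q hq => ?_
    by_cases hy : f y = 0
    · simp [hy]
    · rw [norm_smul, mul_comm]
      gcongr
      exact hC (q, y) ⟨hq, subset_tsupport f hy⟩
  · exact hfi.norm.const_mul C
  · refine Filter.Eventually.of_forall fun y q hq => ?_
    exact (hd q hq y).mul_const (f y)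

lemma kap_sub_int {n : ℕ} {f : Eu n → ℝ} (D : Dat n f) (P : Pol n) (t : ℝ) (x : Eu n) :
    Integrable (fun y => kap P t (x - y) * f y) := by
  refine Continuous.integrable_of_hasCompactSupport ?_ D.supp.mul_left
  exact ((kap_cont P t).comp (continuous_const.sub continuous_id)).mul D.cont

lemma In_fderiv {n : ℕ} {f : Eu n → ℝ} (D : Dat n f) (P : Pol n) (t : ℝ) (x : Eu n) :
    HasFDerivAt (fun x => In f P t x)
      (∑ i, In f (Dp i P) t x • (EuclideanSpace.proj (𝕜 := ℝ) i : Eu n →L[ℝ] ℝ)) x := by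
  have h := diff_under D (fun x y => kap P t (x - y))
    (fun x y => ∑ i, kap (Dp i P) t (x - y) • (EuclideanSpace.proj (𝕜 := ℝ) i : Eu n →L[ℝ] ℝ))
    x (Metric.closedBall x 1) (isCompact_closedBall x 1) (Metric.closedBall_mem_nhds x one_pos)
    (by
      intro q _ y
      have h := (kap_fderiv P t (q - y)).comp q ((hasFDerivAt_id q).sub_const y)
      rwa [ContinuousLinearMap.comp_id] at h)
    (by
      intro q _
      exact (kap_cont P t).comp (continuous_const.sub continuous_id))
    (by
      refine Continuous.continuousOn ?_
      refine continuous_finsetSum _ fun i _ => ?_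
      exact ((kap_cont (Dp i P) t).comp (continuous_fst.sub continuous_snd)).smul continuous_const)
  refine h.congr_fderiv ?_
  simp only [Finset.smul_sum, smul_smul]
  rw [integral_finsetSum]
  · refine Finset.sum_congr rfl fun i _ => ?_
    rw [integral_smul_const]
    simp only [In, mul_comm]
  · intro i _
    refine Integrable.smul_const ?_ _
    simpa only [mul_comm] using kap_sub_int D (Dp i P) t x

lemma In_tderiv {n : ℕ} {f : Eu n → ℝ} (D : Dat n f) (P : Pol n) (t : ℝ) (ht : 0 < t) (x : Eu n) :
    HasDerivAt (fun t => In f P t x) (In f (Tp P) t x) t := by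
  have hpos : ∀ q ∈ Set.Icc (t / 2) (2 * t), 0 < q := fun q hq => by
    have := hq.1; linarith
  have h := diff_under D (fun t y => kap P t (x - y))
    (fun t y => ContinuousLinearMap.toSpanSingleton ℝ (kap (Tp P) t (x - y)))
    t (Set.Icc (t / 2) (2 * t)) isCompact_Icc (Icc_mem_nhds (by linarith) (by linarith))
    (by
      intro q hq y
      exact (kap_tderiv P q (hpos q hq) (x - y)).hasFDerivAt)
    (by
      intro q _
      exact (kap_cont P q).comp (continuous_const.sub continuous_id))
    (by
      have h1 : ContinuousOn (fun q : ℝ × Eu n => kap (Tp P) q.1 (x - q.2))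
          (Set.Icc (t / 2) (2 * t) ×ˢ Set.univ) :=
        (kap_cont2 (Tp P)).comp (f := fun q : ℝ × Eu n => (q.1, x - q.2)) (by fun_prop)
          (fun q hq => ⟨hpos _ hq.1, trivial⟩)
      exact (ContinuousLinearMap.toSpanSingletonCLE (𝕜 := ℝ) (E := ℝ)).continuous.comp_continuousOn h1)
  have h2 := h.hasDerivAt
  refine h2.congr_deriv ?_
  rw [ContinuousLinearMap.integral_apply]
  · simp [In, mul_comm]
  · have := (ContinuousLinearMap.toSpanSingletonCLE (𝕜 := ℝ) (E := ℝ)).toContinuousLinearMap.integrable_comp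
      (kap_sub_int D (Tp P) t x)
    refine this.congr (Filter.Eventually.of_forall fun y => ?_)
    ext
    simp [mul_comm]

lemma eval_bound {n : ℕ} (P : Pol n) (a : ℝ) (ha : 0 < a) :
    ∃ C : ℝ, 0 ≤ C ∧ ∃ k : ℕ, ∀ t : ℝ, a ≤ t → ∀ z : Eu n,
      |eval (pt t z) P| ≤ C * (1 + ‖z‖) ^ k := by
  induction P using MvPolynomial.induction_on with
  | C c => exact ⟨|c|, abs_nonneg _, 0, fun t _ z => by simp⟩
  | add P Q hP hQ =>
    obtain ⟨C, hC, k, h⟩ := hP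
    obtain ⟨C', hC', k', h'⟩ := hQ
    refine ⟨C + C', by positivity, k + k', fun t ht z => ?_⟩
    rw [map_add]
    refine (abs_add_le _ _).trans ?_
    rw [add_mul]
    have h1 : (1:ℝ) ≤ 1 + ‖z‖ := by linarith [norm_nonneg z]
    refine add_le_add ((h t ht z).trans ?_) ((h' t ht z).trans ?_)
    · gcongr <;> first | exact h1 | omega
    · gcongr <;> first | exact h1 | omega
  | mul_X P o hP =>
    obtain ⟨C, hC, k, h⟩ := hP
    refine ⟨C * (1 + 1 / (2 * a)), by positivity, k + 1, fun t ht z => ?_⟩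
    rw [map_mul, abs_mul, eval_X, pow_succ]
    have h2 : |pt t z o| ≤ (1 + 1 / (2 * a)) * (1 + ‖z‖) := by
      have h3 : 0 ≤ ‖z‖ := norm_nonneg z
      have h4 : 0 < 1 / (2 * a) := by positivity
      rcases o with _ | i
      · simp only [pt, Option.elim]
        have ht' : 0 < t := by linarith
        rw [abs_of_pos (by positivity)]
        have : 1 / (2 * t) ≤ 1 / (2 * a) := by gcongr
        nlinarith
      · simp only [pt, Option.elim]
        have : |z i| ≤ ‖z‖ := by simpa using PiLp.norm_apply_le z i
        nlinarith
    calc _ ≤ (C * (1 + ‖z‖) ^ k) * ((1 + 1 / (2 * a)) * (1 + ‖z‖)) := by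
          gcongr
          exact h t ht z
      _ = _ := by ring

lemma Dat.radius {n : ℕ} {f : Eu n → ℝ} (D : Dat n f) :
    ∃ R : ℝ, 0 ≤ R ∧ ∀ y, f y ≠ 0 → ‖y‖ ≤ R := by
  obtain ⟨R, hR⟩ := D.supp.isBounded.exists_norm_le
  refine ⟨max R 0, le_max_right _ _, fun y hy => (hR y (subset_tsupport f hy)).trans (le_max_left _ _)⟩

lemma Gk_pos {n : ℕ} {t : ℝ} (ht : 0 < t) (z : Eu n) : 0 < Gk n t z := by
  unfold Gk; positivity

lemma kap_one {n : ℕ} (t : ℝ) (z : Eu n) : kap (1 : Pol n) t z = Gk n t z := by simp [kap]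

lemma In_bound {n : ℕ} {f : Eu n → ℝ} (D : Dat n f) (P : Pol n) (a : ℝ) (ha : 0 < a) :
    ∃ C : ℝ, 0 ≤ C ∧ ∃ k : ℕ, ∀ t : ℝ, a ≤ t → ∀ x : Eu n,
      |In f P t x| ≤ C * (1 + ‖x‖) ^ k * In f 1 t x := by
  obtain ⟨C, hC, k, h⟩ := eval_bound P a ha
  obtain ⟨R, hR, hR'⟩ := D.radius
  refine ⟨C * (1 + R) ^ k, by positivity, k, fun t ht x => ?_⟩
  unfold In
  rw [← integral_const_mul, ← Real.norm_eq_abs]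
  refine norm_integral_le_of_norm_le ((kap_sub_int D 1 t x).const_mul _) ?_
  refine Filter.Eventually.of_forall fun y => ?_
  by_cases hy : f y = 0
  · simp [hy]
  rw [Real.norm_eq_abs, abs_mul, kap_one, kap, abs_mul, abs_of_pos (Gk_pos (by linarith) _),
    abs_of_nonneg (D.nonneg y), mul_assoc]
  have hG := Gk_pos (t := t) (by linarith) (x - y)
  have hf := D.nonneg y
  refine mul_le_mul_of_nonneg_right ?_ (by positivity)
  refine (h t ht _).trans ?_
  rw [mul_assoc, ← mul_pow]
  have : 1 + ‖x - y‖ ≤ (1 + R) * (1 + ‖x‖) := by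
    have h1 := norm_sub_le x y
    have h2 := hR' y hy
    nlinarith [norm_nonneg x, norm_nonneg y]
  gcongr

lemma Dat.fint {n : ℕ} {f : Eu n → ℝ} (D : Dat n f) : Integrable f :=
  D.cont.integrable_of_hasCompactSupport D.supp

/-- two-sided Gaussian bounds -/
lemma u_bounds {n : ℕ} {f : Eu n → ℝ} (D : Dat n f) (a b : ℝ) (ha : 0 < a) (hab : a ≤ b) :
    ∃ C m c : ℝ, 0 < C ∧ 0 < m ∧ 0 < c ∧ ∀ t ∈ Set.Icc a b, ∀ x : Eu n,
      In f 1 t x ≤ C * Real.exp (-(1 / (8 * b)) * ‖x‖ ^ 2) ∧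
      m * Real.exp (-c * ‖x‖ ^ 2) ≤ In f 1 t x := by
  obtain ⟨R, hR, hR'⟩ := D.radius
  have hb : 0 < b := by linarith
  refine ⟨(4 * π * a) ^ (-(n : ℝ) / 2) * Real.exp (R ^ 2 / (4 * a)),
    (4 * π * b) ^ (-(n : ℝ) / 2) * Real.exp (-R ^ 2 / (2 * a)), 1 / (2 * a), by positivity,
    by positivity, by positivity, fun t ht x => ?_⟩
  have hat := ht.1
  have htb := ht.2
  have ht0 : 0 < t := by linarith
  have hn : -(n : ℝ) / 2 ≤ 0 := by
    have : (0:ℝ) ≤ n := Nat.cast_nonneg n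
    linarith
  have hk : ∀ y, f y ≠ 0 →
      Gk n t (x - y) ≤ (4 * π * a) ^ (-(n : ℝ) / 2) * Real.exp (R ^ 2 / (4 * a)) *
        Real.exp (-(1 / (8 * b)) * ‖x‖ ^ 2) ∧
      (4 * π * b) ^ (-(n : ℝ) / 2) * Real.exp (-R ^ 2 / (2 * a)) *
        Real.exp (-(1 / (2 * a)) * ‖x‖ ^ 2) ≤ Gk n t (x - y) := by
    intro y hy
    have hy' := hR' y hy
    have hx0 := norm_nonneg x
    have hy0 := norm_nonneg y
    have hz0 := norm_nonneg (x - y)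
    have h1 := norm_sub_le x y
    have h2 : ‖x‖ ≤ ‖x - y‖ + ‖y‖ := by simpa using norm_add_le (x - y) y
    have hyR : ‖y‖ ^ 2 ≤ R ^ 2 := by gcongr
    have e1 : ‖x‖ ^ 2 / 2 - R ^ 2 ≤ ‖x - y‖ ^ 2 := by
      nlinarith [sq_nonneg (‖x - y‖ - ‖y‖)]
    have e2 : ‖x - y‖ ^ 2 ≤ 2 * ‖x‖ ^ 2 + 2 * R ^ 2 := by
      nlinarith [sq_nonneg (‖x‖ - ‖y‖)]
    constructor
    · unfold Gk
      rw [mul_assoc _ (Real.exp _) (Real.exp _), ← Real.exp_add]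
      refine mul_le_mul ?_ ?_ (by positivity) (by positivity)
      · exact Real.rpow_le_rpow_of_nonpos (by positivity) (by gcongr) hn
      · rw [Real.exp_le_exp]
        have i1 : ‖x‖ ^ 2 / (8 * b) ≤ ‖x‖ ^ 2 / (8 * t) := by gcongr
        have i2 : R ^ 2 / (4 * t) ≤ R ^ 2 / (4 * a) := by gcongr
        have i3 : -‖x - y‖ ^ 2 / (4 * t) ≤ (R ^ 2 - ‖x‖ ^ 2 / 2) / (4 * t) := by
          gcongr; linarith
        have i4 : (R ^ 2 - ‖x‖ ^ 2 / 2) / (4 * t) = R ^ 2 / (4 * t) - ‖x‖ ^ 2 / (8 * t) := by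
          field_simp; ring
        have i5 : -(1 / (8 * b)) * ‖x‖ ^ 2 = - (‖x‖ ^ 2 / (8 * b)) := by ring
        linarith
    · unfold Gk
      rw [mul_assoc _ (Real.exp _) (Real.exp _), ← Real.exp_add]
      refine mul_le_mul ?_ ?_ (by positivity) (by positivity)
      · exact Real.rpow_le_rpow_of_nonpos (by positivity) (by gcongr) hn
      · rw [Real.exp_le_exp]
        have i1 : ‖x - y‖ ^ 2 / (4 * t) ≤ (2 * ‖x‖ ^ 2 + 2 * R ^ 2) / (4 * a) := by gcongr
        have i4 : (2 * ‖x‖ ^ 2 + 2 * R ^ 2) / (4 * a) = R ^ 2 / (2 * a) + 1 / (2 * a) * ‖x‖ ^ 2 := by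
          field_simp; ring
        have i5 : -‖x - y‖ ^ 2 / (4 * t) = - (‖x - y‖ ^ 2 / (4 * t)) := by ring
        have i6 : -R ^ 2 / (2 * a) = - (R ^ 2 / (2 * a)) := by ring
        linarith
  have hone : ∀ c : ℝ, c = ∫ y, c * f y := by
    intro c; rw [integral_const_mul, D.int, mul_one]
  constructor
  · rw [hone (_ * _)]
    refine integral_mono (kap_sub_int D 1 t x) (D.fint.const_mul _) fun y => ?_
    by_cases hy : f y = 0
    · simp [hy]
    · simp only [kap_one]
      exact mul_le_mul_of_nonneg_right (hk y hy).1 (D.nonneg y)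
  · rw [hone (_ * _)]
    refine integral_mono (D.fint.const_mul _) (kap_sub_int D 1 t x) fun y => ?_
    by_cases hy : f y = 0
    · simp [hy]
    · simp only [kap_one]
      exact mul_le_mul_of_nonneg_right (hk y hy).2 (D.nonneg y)

lemma u_pos {n : ℕ} {f : Eu n → ℝ} (D : Dat n f) {t : ℝ} (ht : 0 < t) (x : Eu n) :
    0 < In f 1 t x := by
  obtain ⟨C, m, c, _, hm, _, h⟩ := u_bounds D t t ht le_rfl
  have := (h t ⟨le_rfl, le_rfl⟩ x).2
  have h2 : 0 < m * Real.exp (-c * ‖x‖ ^ 2) := by positivity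
  linarith

lemma In_sum {n : ℕ} {f : Eu n → ℝ} (D : Dat n f) {ι : Type*} (s : Finset ι) (P : ι → Pol n)
    (t : ℝ) (x : Eu n) : In f (∑ i ∈ s, P i) t x = ∑ i ∈ s, In f (P i) t x := by
  unfold In
  rw [← integral_finsetSum _ fun i _ => kap_sub_int D (P i) t x]
  simp only [kap, map_sum, Finset.sum_mul]

end HeatEnt


namespace HeatEnt

open MvPolynomial

/-- continuous with polynomial growth, uniformly for `t ∈ [a,b]` -/
def Nice {n : ℕ} (a b : ℝ) (h : ℝ → Eu n → ℝ) : Prop :=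
  (∀ t ∈ Set.Icc a b, Continuous (h t)) ∧
  ∃ C : ℝ, 0 ≤ C ∧ ∃ k : ℕ, ∀ t ∈ Set.Icc a b, ∀ x, |h t x| ≤ C * (1 + ‖x‖) ^ k

section
variable {n : ℕ} {a b : ℝ} {g h : ℝ → Eu n → ℝ}

lemma Nice.add (hg : Nice a b g) (hh : Nice a b h) : Nice a b (fun t x => g t x + h t x) := by
  obtain ⟨cg, C, hC, k, hg⟩ := hg
  obtain ⟨ch, C', hC', k', hh⟩ := hh
  refine ⟨fun t ht => (cg t ht).add (ch t ht), C + C', by positivity, k + k', fun t ht x => ?_⟩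
  have h1 : (1:ℝ) ≤ 1 + ‖x‖ := by linarith [norm_nonneg x]
  refine (abs_add_le _ _).trans ?_
  rw [add_mul]
  refine add_le_add ((hg t ht x).trans ?_) ((hh t ht x).trans ?_)
  · exact mul_le_mul_of_nonneg_left (pow_le_pow_right₀ h1 (by omega)) hC
  · exact mul_le_mul_of_nonneg_left (pow_le_pow_right₀ h1 (by omega)) hC'

lemma Nice.mul (hg : Nice a b g) (hh : Nice a b h) : Nice a b (fun t x => g t x * h t x) := by
  obtain ⟨cg, C, hC, k, hg⟩ := hg
  obtain ⟨ch, C', hC', k', hh⟩ := hh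
  refine ⟨fun t ht => (cg t ht).mul (ch t ht), C * C', by positivity, k + k', fun t ht x => ?_⟩
  rw [abs_mul]
  calc _ ≤ (C * (1 + ‖x‖) ^ k) * (C' * (1 + ‖x‖) ^ k') := by
        gcongr
        · exact hg t ht x
        · exact hh t ht x
    _ = _ := by ring

lemma Nice.const (c : ℝ) : Nice a b (fun _ (_ : Eu n) => c) :=
  ⟨fun _ _ => continuous_const, |c|, abs_nonneg c, 0, fun t _ x => by simp⟩

lemma Nice.neg (hg : Nice a b g) : Nice a b (fun t x => - g t x) := by
  simpa using (Nice.const (-1)).mul hg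

lemma Nice.sub (hg : Nice a b g) (hh : Nice a b h) : Nice a b (fun t x => g t x - h t x) := by
  simpa [sub_eq_add_neg] using hg.add hh.neg

lemma Nice.pow2 (hg : Nice a b g) : Nice a b (fun t x => g t x ^ 2) := by
  simpa [sq] using hg.mul hg

lemma Nice.sum {ι : Type*} (s : Finset ι) (h : ι → ℝ → Eu n → ℝ)
    (hh : ∀ i, Nice a b (h i)) : Nice a b (fun t x => ∑ i ∈ s, h i t x) := by
  classical
  induction s using Finset.induction_on with
  | empty => simpa using Nice.const 0
  | insert i s hi ih => simpa [Finset.sum_insert hi] using (hh i).add ih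

end

/-- ratio `I[P]/u` -/
noncomputable def rr {n : ℕ} (f : Eu n → ℝ) (P : Pol n) (t : ℝ) (x : Eu n) : ℝ :=
  In f P t x / In f 1 t x

section
variable {n : ℕ} {f : Eu n → ℝ}

lemma rr_fderiv (D : Dat n f) (P : Pol n) {t : ℝ} (ht : 0 < t) (x : Eu n) :
    HasFDerivAt (fun x => rr f P t x)
      (∑ i, (rr f (Dp i P) t x - rr f P t x * rr f (Dp i 1) t x) •
        (EuclideanSpace.proj (𝕜 := ℝ) i : Eu n →L[ℝ] ℝ)) x := by
  have hu := (u_pos D ht x).ne'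
  have h := (In_fderiv D P t x).mul
    ((hasDerivAt_inv hu).comp_hasFDerivAt x (In_fderiv D 1 t x))
  refine HasFDerivAt.congr_fderiv (f' := _) (h.congr_of_eventuallyEq
    (Filter.Eventually.of_forall fun y => ?_)) ?_
  · simp [rr, div_eq_mul_inv]
  ext v
  simp only [rr, smul_apply, add_apply, Function.comp,
    sum_apply, smul_eq_mul, Finset.mul_sum, ← Finset.sum_add_distrib]
  refine Finset.sum_congr rfl fun i _ => ?_
  field_simp
  ring

lemma log_fderiv (D : Dat n f) {t : ℝ} (ht : 0 < t) (x : Eu n) :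
    HasFDerivAt (fun x => Real.log (In f 1 t x))
      (∑ i, rr f (Dp i 1) t x • (EuclideanSpace.proj (𝕜 := ℝ) i : Eu n →L[ℝ] ℝ)) x := by
  have hu := (u_pos D ht x).ne'
  refine ((In_fderiv D 1 t x).log hu).congr_fderiv ?_
  ext v
  simp only [rr, smul_apply,
    sum_apply, smul_eq_mul, Finset.mul_sum]
  refine Finset.sum_congr rfl fun i _ => ?_
  field_simp

lemma rr_tderiv (D : Dat n f) (P : Pol n) {t : ℝ} (ht : 0 < t) (x : Eu n) :
    HasDerivAt (fun t => rr f P t x) (rr f (Tp P) t x - rr f P t x * rr f (Tp 1) t x) t := by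
  have hu := (u_pos D ht x).ne'
  refine ((In_tderiv D P t ht x).fun_div (In_tderiv D 1 t ht x) hu).congr_deriv ?_
  simp only [rr]
  field_simp

lemma log_tderiv (D : Dat n f) {t : ℝ} (ht : 0 < t) (x : Eu n) :
    HasDerivAt (fun t => Real.log (In f 1 t x)) (rr f (Tp 1) t x) t :=
  (In_tderiv D 1 t ht x).log (u_pos D ht x).ne'

lemma nice_rr (D : Dat n f) (P : Pol n) {a b : ℝ} (ha : 0 < a) : Nice a b (rr f P) := by
  obtain ⟨C, hC, k, h⟩ := In_bound D P a ha
  refine ⟨fun t ht => continuous_iff_continuousAt.2 fun x =>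
    (rr_fderiv D P (ha.trans_le ht.1) x).continuousAt, C, hC, k, fun t ht x => ?_⟩
  have hu := u_pos D (ha.trans_le ht.1) x
  rw [rr, abs_div, abs_of_pos hu, div_le_iff₀ hu]
  exact h t ht.1 x

lemma nice_log (D : Dat n f) {a b : ℝ} (ha : 0 < a) (hab : a ≤ b) :
    Nice a b (fun t x => Real.log (In f 1 t x)) := by
  obtain ⟨C, m, c, hC, hm, hc, h⟩ := u_bounds D a b ha hab
  refine ⟨fun t ht => continuous_iff_continuousAt.2 fun x =>
    (log_fderiv D (ha.trans_le ht.1) x).continuousAt, |Real.log C| + |Real.log m| + c,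
    by positivity, 2, fun t ht x => ?_⟩
  have hu := u_pos D (ha.trans_le ht.1) x
  obtain ⟨h1, h2⟩ := h t ht x
  have hb : 0 < b := by linarith
  have l1 := Real.log_le_log hu h1
  have l2 := Real.log_le_log (by positivity) h2
  rw [Real.log_mul hC.ne' (Real.exp_pos _).ne', Real.log_exp] at l1
  rw [Real.log_mul hm.ne' (Real.exp_pos _).ne', Real.log_exp] at l2
  have i1 : 0 ≤ 1 / (8 * b) * ‖x‖ ^ 2 := by positivity
  have i2 := le_abs_self (Real.log C)
  have i3 := neg_abs_le (Real.log m)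
  have i4 := abs_nonneg (Real.log C)
  have i5 := abs_nonneg (Real.log m)
  have i6 : (1:ℝ) ≤ (1 + ‖x‖) ^ 2 := by nlinarith [norm_nonneg x]
  have i7 : ‖x‖ ^ 2 ≤ (1 + ‖x‖) ^ 2 := by nlinarith [norm_nonneg x]
  have j1 : |Real.log C| ≤ |Real.log C| * (1 + ‖x‖) ^ 2 := le_mul_of_one_le_right i4 i6
  have j2 : |Real.log m| ≤ |Real.log m| * (1 + ‖x‖) ^ 2 := le_mul_of_one_le_right i5 i6
  have j3 : c * ‖x‖ ^ 2 ≤ c * (1 + ‖x‖) ^ 2 := by gcongr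
  have j4 : 0 ≤ c * ‖x‖ ^ 2 := by positivity
  rw [abs_le]
  constructor <;> nlinarith

lemma exp_poly_bound (m : ℕ) (δ : ℝ) (hδ : 0 < δ) : ∃ K : ℝ, 0 ≤ K ∧ ∀ r : ℝ, 0 ≤ r →
    (1 + r) ^ m * Real.exp (-δ * r ^ 2) ≤ K := by
  refine ⟨m.factorial * Real.exp (1 + 1 / (4 * δ)), by positivity, fun r hr => ?_⟩
  have h1 := Real.pow_div_factorial_le_exp (x := 1 + r) (by positivity) m
  rw [div_le_iff₀ (by positivity)] at h1
  have h2 : 1 + r ≤ (1 + 1 / (4 * δ)) + δ * r ^ 2 := by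
    have : δ * r ^ 2 - r + 1 / (4 * δ) = δ * (r - 1 / (2 * δ)) ^ 2 := by field_simp; ring
    have : 0 ≤ δ * (r - 1 / (2 * δ)) ^ 2 := by positivity
    linarith
  have h3 := Real.exp_le_exp.2 h2
  calc (1 + r) ^ m * Real.exp (-δ * r ^ 2)
      ≤ (Real.exp ((1 + 1 / (4 * δ)) + δ * r ^ 2) * m.factorial) * Real.exp (-δ * r ^ 2) := by
        gcongr
        refine h1.trans ?_
        gcongr
    _ = m.factorial * (Real.exp ((1 + 1 / (4 * δ)) + δ * r ^ 2) * Real.exp (-δ * r ^ 2)) := by ring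
    _ = _ := by rw [← Real.exp_add]; ring_nf

lemma Nice.dominated (D : Dat n f) {a b : ℝ} (ha : 0 < a) (hab : a ≤ b) {h : ℝ → Eu n → ℝ}
    (hh : Nice a b h) : ∃ g : Eu n → ℝ, Integrable g ∧ ∀ t ∈ Set.Icc a b, ∀ x,
      ‖In f 1 t x * h t x‖ ≤ g x := by
  obtain ⟨_, C, hC, k, hh⟩ := hh
  obtain ⟨C0, m, c, hC0, hm, hc, h0⟩ := u_bounds D a b ha hab
  have hb : 0 < b := by linarith
  obtain ⟨K, hK, hK'⟩ := exp_poly_bound (k + (n + 1)) (1 / (8 * b)) (by positivity)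
  have hi : Integrable (fun x : Eu n => (1 + ‖x‖) ^ (-((n : ℝ) + 1))) :=
    integrable_one_add_norm (by simp)
  refine ⟨_, hi.const_mul (C0 * C * K), fun t ht x => ?_⟩
  have hu := u_pos D (ha.trans_le ht.1) x
  rw [norm_mul, Real.norm_of_nonneg hu.le, Real.norm_eq_abs]
  have hx := norm_nonneg x
  have h1 : (0:ℝ) < 1 + ‖x‖ := by linarith
  have hk := hK' ‖x‖ hx
  have hr : (1 + ‖x‖) ^ (-((n : ℝ) + 1)) = ((1 + ‖x‖) ^ (n + 1))⁻¹ := by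
    rw [Real.rpow_neg h1.le]
    congr 1
    exact_mod_cast Real.rpow_natCast (1 + ‖x‖) (n + 1)
  rw [hr]
  calc In f 1 t x * |h t x|
      ≤ (C0 * Real.exp (-(1 / (8 * b)) * ‖x‖ ^ 2)) * (C * (1 + ‖x‖) ^ k) := by
        gcongr
        · exact (h0 t ht x).1
        · exact hh t ht x
    _ = C0 * C * ((1 + ‖x‖) ^ (k + (n + 1)) * Real.exp (-(1 / (8 * b)) * ‖x‖ ^ 2)) *
          ((1 + ‖x‖) ^ (n + 1))⁻¹ := by
        rw [pow_add]; field_simp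
    _ ≤ _ := by gcongr

lemma In_cont (D : Dat n f) (P : Pol n) (t : ℝ) : Continuous (In f P t) :=
  continuous_iff_continuousAt.2 fun x => (In_fderiv D P t x).continuousAt

lemma Nice.meas (D : Dat n f) {a b : ℝ} {h : ℝ → Eu n → ℝ}
    (hh : Nice a b h) {t : ℝ} (ht : t ∈ Set.Icc a b) :
    AEStronglyMeasurable (fun x => In f 1 t x * h t x) volume :=
  ((In_cont D 1 t).mul (hh.1 t ht)).aestronglyMeasurable

lemma Nice.integrable (D : Dat n f) {a b : ℝ} (ha : 0 < a) {h : ℝ → Eu n → ℝ}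
    (hh : Nice a b h) {t : ℝ} (ht : t ∈ Set.Icc a b) :
    Integrable (fun x => In f 1 t x * h t x) := by
  obtain ⟨g, hg, hg'⟩ := hh.dominated D ha (ht.1.trans ht.2)
  exact hg.mono' (hh.meas D ht) (Filter.Eventually.of_forall fun x => hg' t ht x)

lemma tdiff (D : Dat n f) {t : ℝ} (ht : 0 < t) (h h' : ℝ → Eu n → ℝ)
    (hN : Nice (t / 2) (2 * t) h) (hN' : Nice (t / 2) (2 * t) h')
    (hd : ∀ s, 0 < s → ∀ x, HasDerivAt (fun s => In f 1 s x * h s x) (In f 1 s x * h' s x) s) :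
    HasDerivAt (fun s => ∫ x, In f 1 s x * h s x) (∫ x, In f 1 t x * h' t x) t := by
  have ha : 0 < t / 2 := by positivity
  have hmem : t ∈ Set.Icc (t / 2) (2 * t) := ⟨by linarith, by linarith⟩
  have hS : Set.Icc (t / 2) (2 * t) ∈ nhds t := Icc_mem_nhds (by linarith) (by linarith)
  obtain ⟨g, hg, hg'⟩ := hN'.dominated D ha (by linarith)
  refine (hasDerivAt_integral_of_dominated_loc_of_deriv_le
    (F := fun s x => In f 1 s x * h s x) (F' := fun s x => In f 1 s x * h' s x) hS ?_ (hN.integrable D ha hmem)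
    (hN'.meas D hmem) ?_ hg ?_).2
  · filter_upwards [hS] with s hs using hN.meas D hs
  · exact Filter.Eventually.of_forall fun x s hs => hg' s hs x
  · exact Filter.Eventually.of_forall fun x s hs => hd s (ha.trans_le hs.1) x

/-- basis vector -/
noncomputable abbrev ee (i : Fin n) : Eu n := EuclideanSpace.single i 1

lemma sum_proj_ee (c : Fin n → ℝ) (i : Fin n) :
    (∑ j, c j • (EuclideanSpace.proj (𝕜 := ℝ) j : Eu n →L[ℝ] ℝ)) (ee i) = c i := by
  classical
  simp [ee]

lemma rr_ld (D : Dat n f) (P : Pol n) {t : ℝ} (ht : 0 < t) (x : Eu n) (i : Fin n) :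
    HasLineDerivAt ℝ (rr f P t) (rr f (Dp i P) t x - rr f P t x * rr f (Dp i 1) t x) x (ee i) := by
  have := (rr_fderiv D P ht x).hasLineDerivAt (ee i)
  rwa [sum_proj_ee] at this

lemma log_ld (D : Dat n f) {t : ℝ} (ht : 0 < t) (x : Eu n) (i : Fin n) :
    HasLineDerivAt ℝ (fun x => Real.log (In f 1 t x)) (rr f (Dp i 1) t x) x (ee i) := by
  have := (log_fderiv D ht x).hasLineDerivAt (ee i)
  rwa [sum_proj_ee] at this

lemma In_ld (D : Dat n f) (P : Pol n) {t : ℝ} (x : Eu n) (i : Fin n) :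
    HasLineDerivAt ℝ (In f P t) (In f (Dp i P) t x) x (ee i) := by
  have := (In_fderiv D P t x).hasLineDerivAt (ee i)
  rwa [sum_proj_ee] at this

lemma ld_mul {g h : Eu n → ℝ} {g' h' : ℝ} {x v : Eu n} (hg : HasLineDerivAt ℝ g g' x v)
    (hh : HasLineDerivAt ℝ h h' x v) :
    HasLineDerivAt ℝ (fun x => g x * h x) (g' * h x + g x * h') x v := by
  have := HasDerivAt.fun_mul hg hh
  simpa [HasLineDerivAt] using this

lemma ld_add {g h : Eu n → ℝ} {g' h' : ℝ} {x v : Eu n} (hg : HasLineDerivAt ℝ g g' x v)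
    (hh : HasLineDerivAt ℝ h h' x v) :
    HasLineDerivAt ℝ (fun x => g x + h x) (g' + h') x v :=
  HasDerivAt.fun_add hg hh

lemma ld_sub {g h : Eu n → ℝ} {g' h' : ℝ} {x v : Eu n} (hg : HasLineDerivAt ℝ g g' x v)
    (hh : HasLineDerivAt ℝ h h' x v) :
    HasLineDerivAt ℝ (fun x => g x - h x) (g' - h') x v :=
  HasDerivAt.fun_sub hg hh

lemma ld_sum {ι : Type*} (s : Finset ι) {g : ι → Eu n → ℝ} {g' : ι → ℝ} {x v : Eu n}
    (hg : ∀ i, HasLineDerivAt ℝ (g i) (g' i) x v) :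
    HasLineDerivAt ℝ (fun x => ∑ i ∈ s, g i x) (∑ i ∈ s, g' i) x v :=
  HasDerivAt.fun_sum fun i _ => hg i

lemma ld_const (c : ℝ) {x v : Eu n} : HasLineDerivAt ℝ (fun _ : Eu n => c) 0 x v :=
  hasDerivAt_const _ _

lemma ld_cm (c : ℝ) {g : Eu n → ℝ} {g' : ℝ} {x v : Eu n} (hg : HasLineDerivAt ℝ g g' x v) :
    HasLineDerivAt ℝ (fun x => c * g x) (c * g') x v :=
  HasDerivAt.const_mul c hg

lemma div_zero (D : Dat n f) {t : ℝ} (ht : 0 < t) (i : Fin n) (Φ Φ' : ℝ → Eu n → ℝ)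
    (hN : Nice t t Φ) (hN' : Nice t t Φ')
    (hd : ∀ x, HasLineDerivAt ℝ (Φ t) (Φ' t x) x (ee i)) :
    ∫ x, In f 1 t x * (Φ' t x + Φ t x * rr f (Dp i 1) t x) = 0 := by
  have hm : t ∈ Set.Icc t t := ⟨le_rfl, le_rfl⟩
  have hI := hN.integrable D ht hm
  have hI' := (hN'.add (hN.mul (nice_rr D (Dp i 1) ht))).integrable D ht hm
  have key := integral_bilinear_hasLineDerivAt_right_eq_neg_left_of_integrable (μ := volume)
    (f := fun _ : Eu n => (1:ℝ)) (f' := fun _ => 0) (g := fun x => In f 1 t x * Φ t x)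
    (g' := fun x => In f 1 t x * (Φ' t x + Φ t x * rr f (Dp i 1) t x)) (v := ee i)
    (B := ContinuousLinearMap.mul ℝ ℝ) (by simp) (by simpa using hI') (by simpa using hI)
    (fun x _ => ld_const 1) (fun x _ => ?_)
  · simpa using key
  · have := ld_mul (In_ld D 1 (t := t) x i) (hd x)
    refine HasDerivAt.congr_deriv this ?_
    have hu := (u_pos D ht x).ne'
    simp only [rr]
    field_simp
    ring

end
end HeatEnt


namespace HeatEnt

open MvPolynomial

section
variable {n : ℕ} {f : Eu n → ℝ}

/-- the entropy flux field -/
noncomputable def Phi (f : Eu n → ℝ) (i : Fin n) (t : ℝ) (x : Eu n) : ℝ :=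
  rr f (Dp i (Tp 1)) t x * (Real.log (In f 1 t x) + 1) + rr f (Tp 1) t x * rr f (Dp i 1) t x
  - 2 * (∑ j, rr f (Dp j 1) t x * rr f (Dp i (Dp j 1)) t x)
  + (∑ j, rr f (Dp j 1) t x * rr f (Dp j 1) t x) * rr f (Dp i 1) t x

/-- its derivative -/
noncomputable def Phi' (f : Eu n → ℝ) (i : Fin n) (t : ℝ) (x : Eu n) : ℝ :=
  ((rr f (Dp i (Dp i (Tp 1))) t x - rr f (Dp i (Tp 1)) t x * rr f (Dp i 1) t x) *
      (Real.log (In f 1 t x) + 1)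
    + rr f (Dp i (Tp 1)) t x * (rr f (Dp i 1) t x + 0))
  + ((rr f (Dp i (Tp 1)) t x - rr f (Tp 1) t x * rr f (Dp i 1) t x) * rr f (Dp i 1) t x
    + rr f (Tp 1) t x * (rr f (Dp i (Dp i 1)) t x - rr f (Dp i 1) t x * rr f (Dp i 1) t x))
  - 2 * (∑ j, ((rr f (Dp i (Dp j 1)) t x - rr f (Dp j 1) t x * rr f (Dp i 1) t x) *
        rr f (Dp i (Dp j 1)) t x
      + rr f (Dp j 1) t x * (rr f (Dp i (Dp i (Dp j 1))) t x
        - rr f (Dp i (Dp j 1)) t x * rr f (Dp i 1) t x)))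
  + ((∑ j, ((rr f (Dp i (Dp j 1)) t x - rr f (Dp j 1) t x * rr f (Dp i 1) t x) * rr f (Dp j 1) t x
      + rr f (Dp j 1) t x * (rr f (Dp i (Dp j 1)) t x - rr f (Dp j 1) t x * rr f (Dp i 1) t x)))
      * rr f (Dp i 1) t x
    + (∑ j, rr f (Dp j 1) t x * rr f (Dp j 1) t x) *
      (rr f (Dp i (Dp i 1)) t x - rr f (Dp i 1) t x * rr f (Dp i 1) t x))

lemma Phi_ld (D : Dat n f) {t : ℝ} (ht : 0 < t) (x : Eu n) (i : Fin n) :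
    HasLineDerivAt ℝ (Phi f i t) (Phi' f i t x) x (ee i) := by
  have hr := fun P => rr_ld D P ht x i
  exact ld_add (ld_sub (ld_add (ld_mul (hr _) (ld_add (log_ld D ht x i) (ld_const 1)))
    (ld_mul (hr _) (hr _))) (ld_cm 2 (ld_sum _ fun j => ld_mul (hr _) (hr _))))
    (ld_mul (ld_sum _ fun j => ld_mul (hr _) (hr _)) (hr _))

lemma nice_Phi (D : Dat n f) {t : ℝ} (ht : 0 < t) (i : Fin n) : Nice t t (Phi f i) := by
  have hr := fun P => nice_rr D P (a := t) (b := t) ht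
  exact ((((hr _).mul ((nice_log D ht le_rfl).add (Nice.const 1))).add ((hr _).mul (hr _))).sub
    ((Nice.const 2).mul (Nice.sum _ _ fun j => (hr _).mul (hr _)))).add
    ((Nice.sum _ _ fun j => (hr _).mul (hr _)).mul (hr _))

lemma nice_Phi' (D : Dat n f) {t : ℝ} (ht : 0 < t) (i : Fin n) : Nice t t (Phi' f i) := by
  have hr := fun P => nice_rr D P (a := t) (b := t) ht
  have hd := fun P Q R => (hr P).sub ((hr Q).mul (hr R))
  exact (((((hd _ _ _).mul ((nice_log D ht le_rfl).add (Nice.const 1))).add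
      ((hr _).mul ((hr _).add (Nice.const 0)))).add
    (((hd _ _ _).mul (hr _)).add ((hr _).mul (hd _ _ _)))).sub
    ((Nice.const 2).mul (Nice.sum _ _ fun j => ((hd _ _ _).mul (hr _)).add
      ((hr _).mul (hd _ _ _))))).add
    (((Nice.sum _ _ fun j => ((hd _ _ _).mul (hr _)).add ((hr _).mul (hd _ _ _))).mul (hr _)).add
     ((Nice.sum _ _ fun j => (hr _).mul (hr _)).mul (hd _ _ _)))

lemma rr_sum (D : Dat n f) {ι : Type*} (s : Finset ι) (P : ι → Pol n)
    (t : ℝ) (x : Eu n) : rr f (∑ i ∈ s, P i) t x = ∑ i ∈ s, rr f (P i) t x := by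
  simp only [rr, In_sum D, Finset.sum_div]

/-- purely algebraic part -/
lemma alg_identity (n : ℕ) (a ρ m : Fin n → ℝ) (b c : Fin n → Fin n → ℝ) (L M l : ℝ)
    (hL : L = ∑ i, b i i) (hM : M = ∑ i, m i) (hρ : ∀ j, ρ j = ∑ i, c i j) :
    ∑ i, ((((m i - ρ i * a i) * l + ρ i * (a i + 0))
      + ((ρ i - L * a i) * a i + L * (b i i - a i * a i))
      - 2 * (∑ j, ((b i j - a j * a i) * b i j + a j * (c i j - b i j * a i)))
      + ((∑ j, ((b i j - a j * a i) * a j + a j * (b i j - a j * a i))) * a i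
        + (∑ j, a j * a j) * (b i i - a i * a i)))
      + (ρ i * l + L * a i - 2 * (∑ j, a j * b i j) + (∑ j, a j * a j) * a i) * a i)
    = M * l + L ^ 2 - 2 * ∑ i, ∑ j, (b i j - a j * a i) ^ 2 := by
  have h1 : ∑ i, ∑ j, a j * c i j = ∑ i, ρ i * a i := by
    rw [Finset.sum_comm]
    refine Finset.sum_congr rfl fun j _ => ?_
    rw [hρ j, Finset.sum_mul]
    exact Finset.sum_congr rfl fun i _ => mul_comm _ _
  have h2 : ∀ i, ((((m i - ρ i * a i) * l + ρ i * (a i + 0))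
      + ((ρ i - L * a i) * a i + L * (b i i - a i * a i))
      - 2 * (∑ j, ((b i j - a j * a i) * b i j + a j * (c i j - b i j * a i)))
      + ((∑ j, ((b i j - a j * a i) * a j + a j * (b i j - a j * a i))) * a i
        + (∑ j, a j * a j) * (b i i - a i * a i)))
      + (ρ i * l + L * a i - 2 * (∑ j, a j * b i j) + (∑ j, a j * a j) * a i) * a i)
    = m i * l + 2 * (ρ i * a i) + L * b i i - L * (a i * a i) + (∑ j, a j * a j) * b i i
      - 2 * ∑ j, (b i j - a j * a i) ^ 2 - 2 * ∑ j, a j * c i j := by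
    intro i
    have e : -2 * (∑ j, ((b i j - a j * a i) * b i j + a j * (c i j - b i j * a i)))
        + (∑ j, ((b i j - a j * a i) * a j + a j * (b i j - a j * a i))) * a i
        - 2 * (∑ j, a j * b i j) * a i
        = - 2 * ∑ j, (b i j - a j * a i) ^ 2 - 2 * ∑ j, a j * c i j := by
      simp only [Finset.mul_sum, Finset.sum_mul, ← Finset.sum_add_distrib,
        ← Finset.sum_sub_distrib]
      exact Finset.sum_congr rfl fun j _ => by ring
    linear_combination e
  rw [Finset.sum_congr rfl fun i _ => h2 i]
  simp only [Finset.sum_add_distrib, Finset.sum_sub_distrib, ← Finset.mul_sum, ← Finset.sum_mul,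
    ← hL, ← hM, h1]
  ring

lemma space_identity (D : Dat n f) {t : ℝ} (ht : 0 < t) :
    ∫ x, In f 1 t x * (rr f (Tp (Tp 1)) t x * (Real.log (In f 1 t x) + 1) + rr f (Tp 1) t x ^ 2)
    = 2 * ∫ x, In f 1 t x * ∑ i, ∑ j,
      (rr f (Dp i (Dp j 1)) t x - rr f (Dp j 1) t x * rr f (Dp i 1) t x) ^ 2 := by
  have hm : t ∈ Set.Icc t t := ⟨le_rfl, le_rfl⟩
  have hr := fun P => nice_rr D P (a := t) (b := t) ht
  have hN1 : Nice t t (fun t x => rr f (Tp (Tp 1)) t x * (Real.log (In f 1 t x) + 1)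
      + rr f (Tp 1) t x ^ 2) :=
    ((hr _).mul ((nice_log D ht le_rfl).add (Nice.const 1))).add (hr _).pow2
  have hN2 : Nice t t (fun t x => ∑ i, ∑ j,
      (rr f (Dp i (Dp j 1)) t x - rr f (Dp j 1) t x * rr f (Dp i 1) t x) ^ 2) :=
    Nice.sum _ _ fun i => Nice.sum _ _ fun j => ((hr _).sub ((hr _).mul (hr _))).pow2
  have hI1 := hN1.integrable D ht hm
  have hI2 := hN2.integrable D ht hm
  have hz := fun i => div_zero D ht i (Phi f i) (Phi' f i) (nice_Phi D ht i) (nice_Phi' D ht i)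
    (fun x => Phi_ld D ht x i)
  have hzi := fun i => ((nice_Phi' D ht i).add ((nice_Phi D ht i).mul (hr (Dp i 1)))).integrable
    D ht hm
  have hs : ∫ x, ∑ i, In f 1 t x * (Phi' f i t x + Phi f i t x * rr f (Dp i 1) t x) = 0 := by
    rw [integral_finsetSum _ fun i _ => hzi i]
    exact Finset.sum_eq_zero fun i _ => hz i
  rw [← integral_const_mul, ← sub_eq_zero, ← integral_sub hI1 (hI2.const_mul 2), ← hs]
  refine integral_congr_ae (Filter.Eventually.of_forall fun x => ?_)
  have key := alg_identity n (fun i => rr f (Dp i 1) t x) (fun i => rr f (Dp i (Tp 1)) t x)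
    (fun i => rr f (Dp i (Dp i (Tp 1))) t x) (fun i j => rr f (Dp i (Dp j 1)) t x)
    (fun i j => rr f (Dp i (Dp i (Dp j 1))) t x) (rr f (Tp 1) t x) (rr f (Tp (Tp 1)) t x)
    (Real.log (In f 1 t x) + 1)
    (by rw [Tp_one, rr_sum D]) (by rw [Tp_Tp_one, rr_sum D])
    (fun j => by
      rw [Tp_one, Dp_sum, rr_sum D]
      refine Finset.sum_congr rfl fun i _ => ?_
      rw [Dp_comm j i, Dp_comm j i])
  simp only [← Finset.mul_sum]
  have key2 : ∑ i, (Phi' f i t x + Phi f i t x * rr f (Dp i 1) t x) = _ := key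
  rw [key2]
  ring

lemma hess_eq (D : Dat n f) {t : ℝ} (ht : 0 < t) (x : Eu n) :
    hessianHSsq n (fun y => Real.log (In f 1 t y)) x = ∑ i, ∑ j,
      (rr f (Dp i (Dp j 1)) t x - rr f (Dp j 1) t x * rr f (Dp i 1) t x) ^ 2 := by
  unfold hessianHSsq
  refine Finset.sum_congr rfl fun i _ => Finset.sum_congr rfl fun j _ => ?_
  congr 1
  unfold hessianMatrix
  rw [iteratedFDeriv_two_apply]
  have h1 : fderiv ℝ (fun y => Real.log (In f 1 t y)) = fun y =>
      ∑ k, rr f (Dp k 1) t y • (EuclideanSpace.proj (𝕜 := ℝ) k : Eu n →L[ℝ] ℝ) :=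
    funext fun y => (log_fderiv D ht y).fderiv
  rw [h1]
  have h2 : HasFDerivAt (fun y =>
      ∑ k, rr f (Dp k 1) t y • (EuclideanSpace.proj (𝕜 := ℝ) k : Eu n →L[ℝ] ℝ)) _ x :=
    HasFDerivAt.fun_sum fun k _ => (rr_fderiv D (Dp k 1) ht x).smul_const
      (EuclideanSpace.proj (𝕜 := ℝ) k : Eu n →L[ℝ] ℝ)
  rw [h2.fderiv]
  simp only [Matrix.cons_val_zero, Matrix.cons_val_one, sum_apply,
    ContinuousLinearMap.smulRight_apply]
  have h3 := fun k => sum_proj_ee (fun i => rr f (Dp i (Dp k 1)) t x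
    - rr f (Dp k 1) t x * rr f (Dp i 1) t x) i
  simp only [sum_apply] at h3
  simp only [h3]
  have h4 := sum_proj_ee (fun k => rr f (Dp i (Dp k 1)) t x
    - rr f (Dp k 1) t x * rr f (Dp i 1) t x) j
  simp only [sum_apply] at h4
  exact h4

/-- first derivative -/
noncomputable def H1 (f : Eu n → ℝ) (t : ℝ) : ℝ :=
  -∫ x, In f 1 t x * (rr f (Tp 1) t x * (Real.log (In f 1 t x) + 1))

lemma ent_deriv (D : Dat n f) {t : ℝ} (ht : 0 < t) :
    HasDerivAt (shannonEntropy n f) (H1 f t) t := by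
  have ha : 0 < t / 2 := by positivity
  have hab : t / 2 ≤ 2 * t := by linarith
  have h := tdiff D ht (fun t x => Real.log (In f 1 t x))
    (fun t x => rr f (Tp 1) t x * (Real.log (In f 1 t x) + 1)) (nice_log D ha hab)
    ((nice_rr D _ ha).mul ((nice_log D ha hab).add (Nice.const 1)))
    (fun s hs x => by
      refine ((In_tderiv D 1 s hs x).fun_mul (log_tderiv D hs x)).congr_deriv ?_
      have hu := (u_pos D hs x).ne'
      simp only [rr]
      field_simp)
  have h2 : shannonEntropy n f = fun s => -∫ x, In f 1 s x * Real.log (In f 1 s x) := by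
    funext s
    simp only [shannonEntropy, In_one]
  rw [h2]
  exact h.fun_neg

lemma H1_deriv (D : Dat n f) {t : ℝ} (ht : 0 < t) :
    HasDerivAt (H1 f) (-∫ x, In f 1 t x * (rr f (Tp (Tp 1)) t x * (Real.log (In f 1 t x) + 1)
      + rr f (Tp 1) t x ^ 2)) t := by
  have ha : 0 < t / 2 := by positivity
  have hab : t / 2 ≤ 2 * t := by linarith
  have h := tdiff D ht (fun t x => rr f (Tp 1) t x * (Real.log (In f 1 t x) + 1))
    (fun t x => rr f (Tp (Tp 1)) t x * (Real.log (In f 1 t x) + 1) + rr f (Tp 1) t x ^ 2)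
    ((nice_rr D _ ha).mul ((nice_log D ha hab).add (Nice.const 1)))
    (((nice_rr D _ ha).mul ((nice_log D ha hab).add (Nice.const 1))).add (nice_rr D _ ha).pow2)
    (fun s hs x => by
      refine ((In_tderiv D 1 s hs x).fun_mul ((rr_tderiv D (Tp 1) hs x).fun_mul
        ((log_tderiv D hs x).add_const 1))).congr_deriv ?_
      have hu := (u_pos D hs x).ne'
      simp only [rr]
      field_simp
      ring)
  exact h.fun_neg

end
end HeatEnt

/-- The second entropy dissipation formula on `ℝⁿ`:
`H''(u(t)) = -2 ∫ ‖∇² log u‖²_HS u dx`. -/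
theorem second_entropy_dissipation (n : ℕ) (hn : 1 ≤ n)
    (f : EuclideanSpace ℝ (Fin n) → ℝ)
    (hf_cont : Continuous f) (hf_nonneg : ∀ x, 0 ≤ f x)
    (hf_supp : HasCompactSupport f)
    (hf_int : ∫ x, f x = 1) :
    ∀ t : ℝ, 0 < t →
      DifferentiableAt ℝ (shannonEntropy n f) t ∧
      DifferentiableAt ℝ (deriv (shannonEntropy n f)) t ∧
      deriv (deriv (shannonEntropy n f)) t =
        -2 * ∫ x, hessianHSsq n (fun y => Real.log (heatSol n f t y)) x * heatSol n f t x := by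
  intro t ht
  have D : HeatEnt.Dat n f := ⟨hf_cont, hf_nonneg, hf_supp, hf_int⟩
  have he : deriv (shannonEntropy n f) =ᶠ[nhds t] HeatEnt.H1 f := by
    filter_upwards [lt_mem_nhds ht] with s hs
    exact (HeatEnt.ent_deriv D hs).deriv
  have h2 := (HeatEnt.H1_deriv D ht).congr_of_eventuallyEq he
  refine ⟨(HeatEnt.ent_deriv D ht).differentiableAt, h2.differentiableAt, ?_⟩
  rw [h2.deriv, HeatEnt.space_identity D ht]
  simp only [← HeatEnt.In_one, HeatEnt.hess_eq D ht]
  simp only [mul_comm, neg_mul]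
end

section
/- Let n ≥ 1 and let f : ℝⁿ → ℝ be a nonnegative, continuous, compactly supported function with ∫_{ℝⁿ} f dx = 1, let u(t,x) = ∫_{ℝⁿ} (4πt)^{-n/2} exp(-‖x-y‖²/(4t)) f(y) dy, and let H(t) = -∫ u log u dx. Then for every t > 0, H''(t) + (2/n) H'(t)² = -(2/n) ∫_{ℝⁿ} (Δ log u - ∫_{ℝⁿ} (Δ log u) u dx)² u dx - 2 ∫_{ℝⁿ} ‖∇² log u - (Δ log u / n) Id‖²_{HS} u dx. Equivalently, with N(t) = exp((2/n)H(t)), (n/(2N)) N'' equals minus twice the variance of Δ log u under u dx divided by n, minus twice the integral of the squared trace-free part of the Hessian of log u. -/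
open Real MeasureTheory

/-- The Laplacian of a function on `ℝⁿ`, i.e. the trace of its Hessian. -/
noncomputable def laplacian (n : ℕ) (g : EuclideanSpace ℝ (Fin n) → ℝ)
    (x : EuclideanSpace ℝ (Fin n)) : ℝ :=
  ∑ i, hessianMatrix n g x i i

/-- The squared Hilbert–Schmidt norm of the trace-free part `∇²g - (Δg/n)·Id` of the Hessian. -/
noncomputable def traceFreeHessianHSsq (n : ℕ) (g : EuclideanSpace ℝ (Fin n) → ℝ)
    (x : EuclideanSpace ℝ (Fin n)) : ℝ :=
  ∑ i, ∑ j, (hessianMatrix n g x i j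
    - (laplacian n g x / n) * (if i = j then 1 else 0)) ^ 2

namespace NIW

open Filter Topology

/-- Gaussian integral of a weight. -/
noncomputable def Zw (n : ℕ) (w : EuclideanSpace ℝ (Fin n) → ℝ) (t : ℝ)
    (x : EuclideanSpace ℝ (Fin n)) : ℝ :=
  ∫ y, Real.exp (-‖x - y‖ ^ 2 / (4 * t)) * w y

/-- Partial derivatives packaged as a Fréchet derivative. -/
def HasD {n : ℕ} (g : EuclideanSpace ℝ (Fin n) → ℝ) (D : Fin n → ℝ)
    (x : EuclideanSpace ℝ (Fin n)) : Prop :=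
  HasFDerivAt g (∑ i, D i • (EuclideanSpace.proj i : EuclideanSpace ℝ (Fin n) →L[ℝ] ℝ)) x

variable {n : ℕ}

lemma HasD.congr {g : EuclideanSpace ℝ (Fin n) → ℝ} {D D' : Fin n → ℝ}
    {x : EuclideanSpace ℝ (Fin n)} (h : HasD g D x) (hD : ∀ i, D i = D' i) : HasD g D' x := by
  have : D = D' := funext hD
  exact this ▸ h

lemma HasD.add {g g' : EuclideanSpace ℝ (Fin n) → ℝ} {D D' : Fin n → ℝ}
    {x : EuclideanSpace ℝ (Fin n)} (h : HasD g D x) (h' : HasD g' D' x) :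
    HasD (fun y => g y + g' y) (fun i => D i + D' i) x := by
  unfold HasD at *
  simp only [add_smul, Finset.sum_add_distrib]
  exact HasFDerivAt.add h h'

lemma HasD.sub {g g' : EuclideanSpace ℝ (Fin n) → ℝ} {D D' : Fin n → ℝ}
    {x : EuclideanSpace ℝ (Fin n)} (h : HasD g D x) (h' : HasD g' D' x) :
    HasD (fun y => g y - g' y) (fun i => D i - D' i) x := by
  unfold HasD at *
  simp only [sub_smul, Finset.sum_sub_distrib]
  exact HasFDerivAt.sub h h'

lemma HasD.mul {g g' : EuclideanSpace ℝ (Fin n) → ℝ} {D D' : Fin n → ℝ}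
    {x : EuclideanSpace ℝ (Fin n)} (h : HasD g D x) (h' : HasD g' D' x) :
    HasD (fun y => g y * g' y) (fun i => g x * D' i + D i * g' x) x := by
  unfold HasD at *
  convert! HasFDerivAt.mul h h' using 1
  simp only [add_smul, Finset.sum_add_distrib, Finset.smul_sum, smul_smul]
  congr 1
  exact Finset.sum_congr rfl fun i _ => by rw [mul_comm]

lemma HasD.const (c : ℝ) (x : EuclideanSpace ℝ (Fin n)) :
    HasD (fun _ => c) (fun _ => 0) x := by
  unfold HasD
  simpa using hasFDerivAt_const c x

lemma HasD.coord (k : Fin n) (x : EuclideanSpace ℝ (Fin n)) :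
    HasD (fun y => y k) (fun i => if k = i then 1 else 0) x := by
  unfold HasD
  simp only [ite_smul, one_smul, zero_smul, Finset.sum_ite_eq, Finset.mem_univ, if_true]
  exact (EuclideanSpace.proj k : EuclideanSpace ℝ (Fin n) →L[ℝ] ℝ).hasFDerivAt

lemma HasD.comp {g : EuclideanSpace ℝ (Fin n) → ℝ} {D : Fin n → ℝ}
    {x : EuclideanSpace ℝ (Fin n)} {φ : ℝ → ℝ} {φ' : ℝ} (hφ : HasDerivAt φ φ' (g x))
    (h : HasD g D x) :
    HasD (fun y => φ (g y)) (fun i => φ' * D i) x := by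
  unfold HasD at *
  convert! hφ.comp_hasFDerivAt x h using 1
  simp only [Finset.smul_sum, smul_smul]

lemma HasD.sum {ι : Type*} (s : Finset ι) {g : ι → EuclideanSpace ℝ (Fin n) → ℝ}
    {D : ι → Fin n → ℝ}
    {x : EuclideanSpace ℝ (Fin n)} (h : ∀ a ∈ s, HasD (g a) (D a) x) :
    HasD (fun y => ∑ a ∈ s, g a y) (fun i => ∑ a ∈ s, D a i) x := by
  classical
  induction s using Finset.induction_on with
  | empty => simpa using HasD.const 0 x
  | insert a s ha ih =>
    simp only [Finset.sum_insert ha]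
    exact (h a (Finset.mem_insert_self _ _)).add
      (ih fun b hb => h b (Finset.mem_insert_of_mem hb))

lemma HasD.normSq (y x : EuclideanSpace ℝ (Fin n)) :
    HasD (fun x => ‖x - y‖ ^ 2) (fun i => 2 * (x i - y i)) x := by
  have h : (fun x : EuclideanSpace ℝ (Fin n) => ‖x - y‖ ^ 2)
      = fun x => ∑ k, (x k - y k) * (x k - y k) := by
    funext x
    rw [EuclideanSpace.norm_sq_eq]
    simp [sq]
  rw [h]
  refine (HasD.sum Finset.univ (fun k _ => (((HasD.coord k x).sub (HasD.const (y k) x)).mul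
    ((HasD.coord k x).sub (HasD.const (y k) x))))).congr ?_
  intro i
  simp [Finset.sum_add_distrib]
  ring

lemma HasD.gauss (t : ℝ) (c : ℝ) (y x : EuclideanSpace ℝ (Fin n)) :
    HasD (fun x => Real.exp (-‖x - y‖ ^ 2 / (4 * t)) * c)
      (fun i => Real.exp (-‖x - y‖ ^ 2 / (4 * t)) * (c * ((y i - x i) / (2 * t)))) x := by
  have h1 := (HasD.normSq y x).mul (HasD.const (-1 / (4 * t)) x)
  have h2 := HasD.comp (Real.hasDerivAt_exp _) h1
  have h3 := h2.mul (HasD.const c x)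
  have e : ∀ x : EuclideanSpace ℝ (Fin n),
      ‖x - y‖ ^ 2 * (-1 / (4 * t)) = -‖x - y‖ ^ 2 / (4 * t) := fun x => by ring
  simp only [e] at h3
  refine h3.congr fun i => ?_
  ring

lemma gauss_le_one {t : ℝ} (ht : 0 < t) (x y : EuclideanSpace ℝ (Fin n)) :
    Real.exp (-‖x - y‖ ^ 2 / (4 * t)) ≤ 1 := by
  rw [Real.exp_le_one_iff]
  apply div_nonpos_of_nonpos_of_nonneg
  · simp
  · positivity

lemma gauss_cont (t : ℝ) (x : EuclideanSpace ℝ (Fin n)) :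
    Continuous (fun y => Real.exp (-‖x - y‖ ^ 2 / (4 * t))) := by
  fun_prop

lemma integrable_gw (t : ℝ) (x : EuclideanSpace ℝ (Fin n)) {w : EuclideanSpace ℝ (Fin n) → ℝ}
    (hw : Continuous w) (hs : HasCompactSupport w) :
    Integrable (fun y => Real.exp (-‖x - y‖ ^ 2 / (4 * t)) * w y) :=
  ((gauss_cont t x).mul hw).integrable_of_hasCompactSupport hs.mul_left

lemma coord_le (x : EuclideanSpace ℝ (Fin n)) (i : Fin n) : |x i| ≤ ‖x‖ := by
  simpa using PiLp.norm_apply_le x i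

lemma Zw_hasD {w : EuclideanSpace ℝ (Fin n) → ℝ}
    (hw : Continuous w) (hs : HasCompactSupport w) {t : ℝ} (ht : 0 < t)
    (x : EuclideanSpace ℝ (Fin n)) :
    HasD (Zw n w t) (fun i => (Zw n (fun y => y i * w y) t x - x i * Zw n w t x) / (2 * t)) x := by
  have hwi : ∀ i, Continuous (fun y : EuclideanSpace ℝ (Fin n) => y i * w y) := fun i => by fun_prop
  have hsi : ∀ i, HasCompactSupport (fun y : EuclideanSpace ℝ (Fin n) => y i * w y) :=
    fun i => hs.mul_left
  have key := hasFDerivAt_integral_of_dominated_of_fderiv_le (𝕜 := ℝ) (μ := volume)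
    (F := fun x y => Real.exp (-‖x - y‖ ^ 2 / (4 * t)) * w y)
    (F' := fun x y => ∑ i, (Real.exp (-‖x - y‖ ^ 2 / (4 * t)) * (w y * ((y i - x i) / (2 * t)))) •
      (EuclideanSpace.proj i : EuclideanSpace ℝ (Fin n) →L[ℝ] ℝ))
    (bound := fun y => ∑ i, (|w y| * ((|y i| + (|x i| + 1)) / (2 * t))) *
      ‖(EuclideanSpace.proj i : EuclideanSpace ℝ (Fin n) →L[ℝ] ℝ)‖)
    (s := Metric.ball x 1) (x₀ := x) (Metric.ball_mem_nhds x one_pos)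
    (Eventually.of_forall fun x => ((gauss_cont t x).mul hw).aestronglyMeasurable)
    (integrable_gw t x hw hs)
    (by
      apply Continuous.aestronglyMeasurable
      fun_prop)
    (Eventually.of_forall fun y z hz => by
      refine (norm_sum_le _ _).trans (Finset.sum_le_sum fun i _ => ?_)
      rw [norm_smul]
      refine mul_le_mul_of_nonneg_right ?_ (norm_nonneg _)
      rw [Real.norm_eq_abs, abs_mul, abs_mul, abs_div, abs_of_pos (Real.exp_pos _),
        abs_of_pos (by positivity : 0 < 2 * t)]
      have h1 : |y i - z i| ≤ |y i| + (|x i| + 1) := by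
        have h2 := coord_le (z - x) i
        have h3 : ‖z - x‖ < 1 := by simpa [dist_eq_norm] using hz
        have h4 : (z - x) i = z i - x i := rfl
        rw [h4] at h2
        have := abs_sub (y i) (z i)
        have h5 : |z i| ≤ |x i| + |z i - x i| := by
          have := abs_add_le (x i) (z i - x i)
          simpa using this
        linarith [abs_sub (y i) (z i)]
      calc _ ≤ 1 * (|w y| * ((|y i| + (|x i| + 1)) / (2 * t))) := by
            gcongr
            exact gauss_le_one ht _ _
        _ = _ := one_mul _)
    (by
      refine integrable_finsetSum _ fun i _ => Integrable.mul_const ?_ _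
      refine Continuous.integrable_of_hasCompactSupport (by fun_prop) ?_
      exact (hs.norm).mul_right)
    (Eventually.of_forall fun y z _ => HasD.gauss t (w y) y z)
  have e : ∀ i, Integrable (fun y => Real.exp (-‖x - y‖ ^ 2 / (4 * t)) * (w y * ((y i - x i) / (2 * t)))) := by
    intro i
    exact integrable_gw t x (w := fun y => w y * ((y i - x i) / (2 * t))) (by fun_prop) hs.mul_right
  rw [integral_finsetSum _ (fun i _ => (e i).smul_const _)] at key
  simp only [integral_smul_const] at key
  refine HasD.congr (D := fun i => ∫ y, Real.exp (-‖x - y‖ ^ 2 / (4 * t)) * (w y * ((y i - x i) / (2 * t)))) key ?_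
  intro i
  simp only [Zw]
  rw [← integral_const_mul, ← integral_sub (integrable_gw t x (hwi i) (hsi i))
    ((integrable_gw t x hw hs).const_mul _), ← integral_div]
  congr 1
  funext y
  ring

lemma Zw_hasDerivAt {w : EuclideanSpace ℝ (Fin n) → ℝ}
    (hw : Continuous w) (hs : HasCompactSupport w) {t : ℝ} (ht : 0 < t)
    (x : EuclideanSpace ℝ (Fin n)) :
    HasDerivAt (fun t => Zw n w t x)
      ((∑ k, (x k ^ 2 * Zw n w t x - 2 * x k * Zw n (fun y => y k * w y) t x
        + Zw n (fun y => y k * (y k * w y)) t x)) / (4 * t ^ 2)) t := by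
  have key := hasDerivAt_integral_of_dominated_loc_of_deriv_le (𝕜 := ℝ) (μ := volume)
    (F := fun t y => Real.exp (-‖x - y‖ ^ 2 / (4 * t)) * w y)
    (F' := fun t y => Real.exp (-‖x - y‖ ^ 2 / (4 * t)) * (w y * (‖x - y‖ ^ 2 / (4 * t ^ 2))))
    (bound := fun y => |w y| * (‖x - y‖ ^ 2 / (4 * (t / 2) ^ 2)))
    (s := Set.Ioi (t / 2)) (x₀ := t) (Ioi_mem_nhds (by linarith))
    (Eventually.of_forall fun t => ((gauss_cont t x).mul hw).aestronglyMeasurable)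
    (integrable_gw t x hw hs)
    (by
      apply Continuous.aestronglyMeasurable
      fun_prop)
    (Eventually.of_forall fun y s hs => by
      have hs' : t / 2 < s := hs
      have hs0 : 0 < s := by linarith
      rw [Real.norm_eq_abs, abs_mul, abs_mul, abs_of_pos (Real.exp_pos _),
        abs_of_nonneg (by positivity : 0 ≤ ‖x - y‖ ^ 2 / (4 * s ^ 2))]
      calc _ ≤ 1 * (|w y| * (‖x - y‖ ^ 2 / (4 * (t / 2) ^ 2))) := by
            gcongr
            exact gauss_le_one hs0 _ _
        _ = _ := one_mul _)
    (by
      refine Continuous.integrable_of_hasCompactSupport (by fun_prop) ?_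
      exact (hs.norm).mul_right)
    (Eventually.of_forall fun y s hs => by
      have hs' : t / 2 < s := hs
      have hs0 : s ≠ 0 := by linarith
      have h1 : HasDerivAt (fun s : ℝ => -‖x - y‖ ^ 2 / (4 * s)) (‖x - y‖ ^ 2 / (4 * s ^ 2)) s := by
        convert! (((hasDerivAt_id s).const_mul 4).fun_inv (by simpa using hs0)).const_mul (-‖x - y‖ ^ 2)
          using 1
        simp only [id]
        field_simp
      convert! (h1.exp).mul_const (w y) using 1
      ring)
  convert! key.2 using 1
  have e1 : ∀ y : EuclideanSpace ℝ (Fin n), Real.exp (-‖x - y‖ ^ 2 / (4 * t)) * (w y * (‖x - y‖ ^ 2 / (4 * t ^ 2)))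
    = (∑ k, (x k ^ 2 * (Real.exp (-‖x - y‖ ^ 2 / (4 * t)) * w y)
      - 2 * x k * (Real.exp (-‖x - y‖ ^ 2 / (4 * t)) * (y k * w y))
      + Real.exp (-‖x - y‖ ^ 2 / (4 * t)) * (y k * (y k * w y)))) / (4 * t ^ 2) := by
    intro y
    have : ‖x - y‖ ^ 2 / (4 * t ^ 2) = (∑ k, (x k - y k) ^ 2) / (4 * t ^ 2) := by
      rw [EuclideanSpace.norm_sq_eq]
      simp
    rw [this, ← mul_assoc, mul_div_assoc', Finset.mul_sum]
    congr 1
    refine Finset.sum_congr rfl fun k _ => by ring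
  simp only [e1]
  have i1 := integrable_gw t x hw hs
  have i2 : ∀ k, Integrable (fun y : EuclideanSpace ℝ (Fin n) => Real.exp (-‖x - y‖ ^ 2 / (4 * t)) * (y k * w y)) :=
    fun k => integrable_gw t x (w := fun y => y k * w y) (by fun_prop) hs.mul_left
  have i3 : ∀ k, Integrable (fun y : EuclideanSpace ℝ (Fin n) => Real.exp (-‖x - y‖ ^ 2 / (4 * t)) * (y k * (y k * w y))) :=
    fun k => integrable_gw t x (w := fun y => y k * (y k * w y)) (by fun_prop) hs.mul_left.mul_left
  have i4 : ∀ k, Integrable (fun y : EuclideanSpace ℝ (Fin n) =>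
      x k ^ 2 * (Real.exp (-‖x - y‖ ^ 2 / (4 * t)) * w y)
      - 2 * x k * (Real.exp (-‖x - y‖ ^ 2 / (4 * t)) * (y k * w y))) :=
    fun k => (i1.const_mul _).sub ((i2 k).const_mul _)
  have i5 : ∀ k, Integrable (fun y : EuclideanSpace ℝ (Fin n) =>
      x k ^ 2 * (Real.exp (-‖x - y‖ ^ 2 / (4 * t)) * w y)
      - 2 * x k * (Real.exp (-‖x - y‖ ^ 2 / (4 * t)) * (y k * w y))
      + Real.exp (-‖x - y‖ ^ 2 / (4 * t)) * (y k * (y k * w y))) :=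
    fun k => (i4 k).add (i3 k)
  rw [integral_div, integral_finsetSum _ (fun k _ => i5 k)]
  congr 1
  refine Finset.sum_congr rfl fun k _ => ?_
  rw [integral_add (i4 k) (i3 k), integral_sub (i1.const_mul _) ((i2 k).const_mul _),
    integral_const_mul, integral_const_mul]
  rfl

/-- Admissible initial data. -/
structure Adm (f : EuclideanSpace ℝ (Fin n) → ℝ) : Prop where
  cont : Continuous f
  nonneg : ∀ x, 0 ≤ f x
  supp : HasCompactSupport f
  int : ∫ x, f x = 1

/-- Posterior moments. -/
noncomputable def M (f p : EuclideanSpace ℝ (Fin n) → ℝ) (t : ℝ)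
    (x : EuclideanSpace ℝ (Fin n)) : ℝ :=
  Zw n (fun y => p y * f y) t x / Zw n f t x

/-- Logarithm of the heat solution. -/
noncomputable def L (f : EuclideanSpace ℝ (Fin n) → ℝ) (t : ℝ)
    (x : EuclideanSpace ℝ (Fin n)) : ℝ :=
  Real.log (heatSol n f t x)

variable {f : EuclideanSpace ℝ (Fin n) → ℝ}

lemma Adm.exists_ne (hf : Adm f) : ∃ x, f x ≠ 0 := by
  by_contra! h
  have := hf.int
  simp [h] at this

lemma Adm.Zpos (hf : Adm f) (t : ℝ) (x : EuclideanSpace ℝ (Fin n)) : 0 < Zw n f t x := by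
  obtain ⟨y, hy⟩ := hf.exists_ne
  refine Continuous.integral_pos_of_hasCompactSupport_nonneg_nonzero (x := y)
    ((gauss_cont t x).mul hf.cont) hf.supp.mul_left (fun z => ?_) ?_
  · exact mul_nonneg (Real.exp_pos _).le (hf.nonneg z)
  · exact mul_ne_zero (Real.exp_pos _).ne' hy

lemma Adm.M_hasD (hf : Adm f) {p : EuclideanSpace ℝ (Fin n) → ℝ} (hp : Continuous p)
    {t : ℝ} (ht : 0 < t) (x : EuclideanSpace ℝ (Fin n)) :
    HasD (M f p t)
      (fun i => (M f (fun y => y i * p y) t x - M f p t x * M f (fun y => y i) t x) / (2 * t)) x := by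
  have hZ := (hf.Zpos t x).ne'
  have h1 := Zw_hasD (w := fun y => p y * f y) (hp.mul hf.cont) hf.supp.mul_left ht x
  have h2 := HasD.comp (hasDerivAt_inv hZ) (Zw_hasD hf.cont hf.supp ht x)
  refine (h1.mul h2).congr fun i => ?_
  simp only [M, mul_assoc]
  field_simp
  ring

lemma Adm.M_hasDerivAt (hf : Adm f) {p : EuclideanSpace ℝ (Fin n) → ℝ} (hp : Continuous p)
    {t : ℝ} (ht : 0 < t) (x : EuclideanSpace ℝ (Fin n)) :
    HasDerivAt (fun t => M f p t x)
      ((∑ k, (-2 * x k * (M f (fun y => y k * p y) t x - M f (fun y => y k) t x * M f p t x)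
        + (M f (fun y => y k * (y k * p y)) t x - M f (fun y => y k * y k) t x * M f p t x)))
          / (4 * t ^ 2)) t := by
  have hZ := (hf.Zpos t x).ne'
  have h1 := Zw_hasDerivAt (w := fun y => p y * f y) (hp.mul hf.cont) hf.supp.mul_left ht x
  have h2 := Zw_hasDerivAt hf.cont hf.supp ht x
  have h3 := h1.fun_div h2 hZ
  convert! h3 using 1
  simp only [M, mul_assoc]
  rw [div_mul_eq_mul_div, mul_div_assoc', div_sub_div_same, div_right_comm]
  congr 1
  rw [Finset.sum_mul, Finset.mul_sum, ← Finset.sum_sub_distrib, Finset.sum_div]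
  refine Finset.sum_congr rfl fun k _ => ?_
  field_simp
  ring

lemma Adm.M_bound (hf : Adm f) {p : EuclideanSpace ℝ (Fin n) → ℝ} (hp : Continuous p) :
    ∃ C, 0 ≤ C ∧ ∀ t x, |M f p t x| ≤ C := by
  obtain ⟨C, hC⟩ := hf.supp.exists_bound_of_continuousOn (f := p) hp.continuousOn
  refine ⟨max C 0, le_max_right _ _, fun t x => ?_⟩
  have hZ := hf.Zpos t x
  have hb : ∀ y, |p y| * f y ≤ max C 0 * f y := by
    intro y
    by_cases hy : y ∈ tsupport f
    · have := hC y hy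
      exact mul_le_mul_of_nonneg_right (this.trans (le_max_left _ _)) (hf.nonneg y)
    · simp [image_eq_zero_of_notMem_tsupport hy]
  rw [M, abs_div, abs_of_pos hZ, div_le_iff₀ hZ]
  calc |Zw n (fun y => p y * f y) t x| ≤ ∫ y, |Real.exp (-‖x - y‖ ^ 2 / (4 * t)) * (p y * f y)| :=
        abs_integral_le_integral_abs
    _ ≤ ∫ y, max C 0 * (Real.exp (-‖x - y‖ ^ 2 / (4 * t)) * f y) := by
        refine integral_mono (integrable_gw t x (hp.mul hf.cont) hf.supp.mul_left).abs
          ((integrable_gw t x hf.cont hf.supp).const_mul _) fun y => ?_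
        simp only [abs_mul, abs_of_pos (Real.exp_pos _), abs_of_nonneg (hf.nonneg y)]
        have := mul_le_mul_of_nonneg_left (hb y) (Real.exp_pos (-‖x - y‖ ^ 2 / (4 * t))).le
        linarith
    _ = _ := by rw [integral_const_mul]; rfl

lemma heatSol_eq (t : ℝ) (x : EuclideanSpace ℝ (Fin n)) :
    heatSol n f t x = (4 * π * t) ^ (-(n : ℝ) / 2) * Zw n f t x := by
  simp only [heatSol, Zw, mul_assoc]
  rw [integral_const_mul]

lemma Adm.heat_pos (hf : Adm f) {t : ℝ} (ht : 0 < t) (x : EuclideanSpace ℝ (Fin n)) :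
    0 < heatSol n f t x := by
  rw [heatSol_eq]
  have := hf.Zpos t x
  positivity

lemma Adm.exp_L (hf : Adm f) {t : ℝ} (ht : 0 < t) (x : EuclideanSpace ℝ (Fin n)) :
    Real.exp (L f t x) = heatSol n f t x := Real.exp_log (hf.heat_pos ht x)

lemma Adm.L_eq (hf : Adm f) {t : ℝ} (ht : 0 < t) (x : EuclideanSpace ℝ (Fin n)) :
    L f t x = -(n : ℝ) / 2 * Real.log (4 * π * t) + Real.log (Zw n f t x) := by
  rw [L, heatSol_eq, Real.log_mul (by positivity) (hf.Zpos t x).ne', Real.log_rpow (by positivity)]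

lemma Adm.L_hasD (hf : Adm f) {t : ℝ} (ht : 0 < t) (x : EuclideanSpace ℝ (Fin n)) :
    HasD (L f t) (fun i => (M f (fun y => y i) t x - x i) / (2 * t)) x := by
  have hZ := (hf.Zpos t x).ne'
  have e : L f t = fun x => -(n : ℝ) / 2 * Real.log (4 * π * t) + Real.log (Zw n f t x) :=
    funext fun x => hf.L_eq ht x
  rw [e]
  refine ((HasD.const _ x).add (HasD.comp (Real.hasDerivAt_log hZ)
    (Zw_hasD hf.cont hf.supp ht x))).congr fun i => ?_
  simp only [M]
  field_simp
  ring

lemma Adm.L_hasDerivAt (hf : Adm f) {t : ℝ} (ht : 0 < t) (x : EuclideanSpace ℝ (Fin n)) :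
    HasDerivAt (fun t => L f t x) (∑ k, (-1 / (2 * t) + (x k ^ 2 - 2 * x k * M f (fun y => y k) t x
      + M f (fun y => y k * y k) t x) / (4 * t ^ 2))) t := by
  have hZ := (hf.Zpos t x).ne'
  have e : (fun t => L f t x) =ᶠ[𝓝 t]
      fun t => -(n : ℝ) / 2 * Real.log (4 * π * t) + Real.log (Zw n f t x) := by
    filter_upwards [Ioi_mem_nhds ht] with s hs using hf.L_eq hs x
  refine HasDerivAt.congr_of_eventuallyEq ?_ e
  have h1 : HasDerivAt (fun t => Real.log (4 * π * t)) (1 / t) t := by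
    have := ((hasDerivAt_id t).const_mul (4 * π)).log (by simp; positivity)
    convert! this using 1
    simp only [id]
    have := Real.pi_pos.ne'
    field_simp
  have h2 := (Zw_hasDerivAt hf.cont hf.supp ht x).log hZ
  convert! (h1.const_mul (-(n : ℝ) / 2)).add h2 using 1
  rw [Finset.sum_add_distrib, Finset.sum_const, Finset.card_univ, Fintype.card_fin, nsmul_eq_mul]
  congr 1
  · field_simp
  · rw [Finset.sum_div, Finset.sum_div]
    refine Finset.sum_congr rfl fun k _ => ?_
    simp only [M, mul_assoc]
    field_simp

lemma Adm.radius (hf : Adm f) : ∃ R, 0 ≤ R ∧ ∀ y, f y ≠ 0 → ‖y‖ ≤ R := by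
  obtain ⟨C, hC⟩ := hf.supp.exists_bound_of_continuousOn (f := fun y => y) continuous_id.continuousOn
  exact ⟨max C 0, le_max_right _ _, fun y hy => (hC y (subset_tsupport f hy)).trans (le_max_left _ _)⟩

lemma Adm.Z_bounds (hf : Adm f) : ∃ R, 0 ≤ R ∧ ∀ t, 0 < t → ∀ x,
    Real.exp (-(‖x‖ + R) ^ 2 / (4 * t)) ≤ Zw n f t x ∧
    Zw n f t x ≤ Real.exp (-(‖x‖ ^ 2 / 2 - R ^ 2) / (4 * t)) := by
  obtain ⟨R, hR, h⟩ := hf.radius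
  have hfi : Integrable f := hf.cont.integrable_of_hasCompactSupport hf.supp
  refine ⟨R, hR, fun t ht x => ⟨?_, ?_⟩⟩
  · calc Real.exp (-(‖x‖ + R) ^ 2 / (4 * t)) = ∫ y, Real.exp (-(‖x‖ + R) ^ 2 / (4 * t)) * f y := by
          rw [integral_const_mul, hf.int, mul_one]
      _ ≤ Zw n f t x := by
          refine integral_mono (hfi.const_mul _) (integrable_gw t x hf.cont hf.supp) fun y => ?_
          by_cases hy : f y = 0
          · simp [hy]
          · refine mul_le_mul_of_nonneg_right ?_ (hf.nonneg y)
            have := h y hy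
            have h2 := norm_sub_le x y
            gcongr
            linarith
  · calc Zw n f t x ≤ ∫ y, Real.exp (-(‖x‖ ^ 2 / 2 - R ^ 2) / (4 * t)) * f y := by
          refine integral_mono (integrable_gw t x hf.cont hf.supp) (hfi.const_mul _) fun y => ?_
          by_cases hy : f y = 0
          · simp [hy]
          · refine mul_le_mul_of_nonneg_right ?_ (hf.nonneg y)
            have h1 := h y hy
            have h2 : ‖x‖ ≤ ‖x - y‖ + ‖y‖ := by simpa using norm_add_le (x - y) y
            have h3 : ‖x‖ ^ 2 / 2 - R ^ 2 ≤ ‖x - y‖ ^ 2 := by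
              nlinarith [norm_nonneg x, norm_nonneg y, norm_nonneg (x - y), sq_nonneg (‖x - y‖ - ‖y‖),
                mul_self_le_mul_self (norm_nonneg x) h2, mul_self_le_mul_self (norm_nonneg y) h1]
            gcongr
      _ = _ := by rw [integral_const_mul, hf.int, mul_one]

lemma Adm.integral_heat (hf : Adm f) {t : ℝ} (ht : 0 < t) : ∫ x, heatSol n f t x = 1 := by
  have hfi : Integrable f := hf.cont.integrable_of_hasCompactSupport hf.supp
  have hb : 0 < 1 / (4 * t) := by positivity
  have hg : Integrable (fun v : EuclideanSpace ℝ (Fin n) => Real.exp (-‖v‖ ^ 2 / (4 * t))) := by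
    have := integrable_of_integral_eq_one (f := fun v : EuclideanSpace ℝ (Fin n) =>
      (π / (1 / (4 * t))) ^ (-(Module.finrank ℝ (EuclideanSpace ℝ (Fin n)) / 2 : ℝ)) * Real.exp (-(1 / (4 * t)) * ‖v‖ ^ 2)) (by
        rw [integral_const_mul, GaussianFourier.integral_rexp_neg_mul_sq_norm hb, ← Real.rpow_add (by positivity)]
        simp)
    rw [integrable_const_mul_iff (IsUnit.mk0 _ (by positivity))] at this
    convert! this using 3
    ring
  have hgi : ∫ v : EuclideanSpace ℝ (Fin n), Real.exp (-‖v‖ ^ 2 / (4 * t)) = (4 * π * t) ^ ((n : ℝ) / 2) := by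
    have := GaussianFourier.integral_rexp_neg_mul_sq_norm (V := EuclideanSpace ℝ (Fin n)) hb
    rw [finrank_euclideanSpace_fin] at this
    convert! this using 2
    · funext v
      congr 1
      ring
    · field_simp
  have hZ : ∫ x, Zw n f t x = (4 * π * t) ^ ((n : ℝ) / 2) := by
    simp only [Zw]
    rw [integral_integral_swap]
    · simp only [integral_mul_const]
      have : ∀ y : EuclideanSpace ℝ (Fin n), ∫ x, Real.exp (-‖x - y‖ ^ 2 / (4 * t)) = (4 * π * t) ^ ((n : ℝ) / 2) := by
        intro y
        rw [← hgi]
        exact integral_sub_right_eq_self (fun v => Real.exp (-‖v‖ ^ 2 / (4 * t))) y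
      simp only [this]
      rw [integral_const_mul, hf.int, mul_one]
    · have h2 := (hfi.convolution_integrand (ContinuousLinearMap.mul ℝ ℝ) hg (μ := volume) (ν := volume))
      convert! h2 using 1
      funext ⟨x, y⟩
      simp [Function.uncurry, mul_comm]
  simp only [heatSol_eq]
  rw [integral_const_mul, hZ, ← Real.rpow_add (by positivity)]
  ring_nf
  simp

/-- Functions with at most exponential growth in space, locally uniformly in time. -/
structure Good (G : ℝ → EuclideanSpace ℝ (Fin n) → ℝ) : Prop where
  cont : ∀ t, 0 < t → Continuous (G t)
  bd : ∀ a b, 0 < a → ∃ C B, 0 ≤ C ∧ 0 ≤ B ∧ ∀ t ∈ Set.Icc a b, ∀ x,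
    |G t x| ≤ C * Real.exp (B * ‖x‖)

lemma Good.const (c : ℝ) : Good (fun _ (_ : EuclideanSpace ℝ (Fin n)) => c) :=
  ⟨fun _ _ => continuous_const, fun a b _ => ⟨|c|, 0, abs_nonneg _, le_rfl, fun t _ x => by simp⟩⟩

lemma Good.coord (i : Fin n) : Good (fun _ (x : EuclideanSpace ℝ (Fin n)) => x i) :=
  ⟨fun _ _ => by fun_prop, fun a b _ => ⟨1, 1, zero_le_one, zero_le_one, fun t _ x => by
    have h1 := coord_le x i
    have h2 := Real.add_one_le_exp ‖x‖
    simp only [one_mul]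
    linarith⟩⟩

lemma Good.inv2t : Good (fun t (_ : EuclideanSpace ℝ (Fin n)) => (2 * t)⁻¹) :=
  ⟨fun _ _ => continuous_const, fun a b ha => ⟨(2 * a)⁻¹, 0, by positivity, le_rfl, fun t ht x => by
    have h1 := ht.1
    have : 0 < t := by linarith
    rw [abs_of_pos (by positivity)]
    simp only [zero_mul, Real.exp_zero, mul_one]
    gcongr⟩⟩

lemma Good.add {G G' : ℝ → EuclideanSpace ℝ (Fin n) → ℝ} (h : Good G) (h' : Good G') :
    Good (fun t x => G t x + G' t x) := by
  refine ⟨fun t ht => (h.cont t ht).add (h'.cont t ht), fun a b ha => ?_⟩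
  obtain ⟨C, B, hC, hB, hb⟩ := h.bd a b ha
  obtain ⟨C', B', hC', hB', hb'⟩ := h'.bd a b ha
  refine ⟨C + C', B + B', by positivity, by positivity, fun t ht x => ?_⟩
  calc |G t x + G' t x| ≤ |G t x| + |G' t x| := abs_add_le _ _
    _ ≤ C * Real.exp (B * ‖x‖) + C' * Real.exp (B' * ‖x‖) := add_le_add (hb t ht x) (hb' t ht x)
    _ ≤ C * Real.exp ((B + B') * ‖x‖) + C' * Real.exp ((B + B') * ‖x‖) := by
      gcongr <;> linarith
    _ = _ := by ring

lemma Good.mul {G G' : ℝ → EuclideanSpace ℝ (Fin n) → ℝ} (h : Good G) (h' : Good G') :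
    Good (fun t x => G t x * G' t x) := by
  refine ⟨fun t ht => (h.cont t ht).mul (h'.cont t ht), fun a b ha => ?_⟩
  obtain ⟨C, B, hC, hB, hb⟩ := h.bd a b ha
  obtain ⟨C', B', hC', hB', hb'⟩ := h'.bd a b ha
  refine ⟨C * C', B + B', by positivity, by positivity, fun t ht x => ?_⟩
  calc |G t x * G' t x| = |G t x| * |G' t x| := abs_mul _ _
    _ ≤ (C * Real.exp (B * ‖x‖)) * (C' * Real.exp (B' * ‖x‖)) := by
      gcongr
      · exact hb t ht x
      · exact hb' t ht x
    _ = _ := by rw [add_mul, Real.exp_add]; ring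

lemma Good.sub {G G' : ℝ → EuclideanSpace ℝ (Fin n) → ℝ} (h : Good G) (h' : Good G') :
    Good (fun t x => G t x - G' t x) := by
  have := h.add ((Good.const (-1)).mul h')
  simpa [sub_eq_add_neg] using this

lemma Good.sum {ι : Type*} (s : Finset ι) {G : ι → ℝ → EuclideanSpace ℝ (Fin n) → ℝ}
    (h : ∀ a ∈ s, Good (G a)) : Good (fun t x => ∑ a ∈ s, G a t x) := by
  classical
  induction s using Finset.induction_on with
  | empty => simpa using Good.const 0
  | insert a s ha ih =>
    simp only [Finset.sum_insert ha]
    exact (h a (Finset.mem_insert_self _ _)).add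
      (ih fun b hb => h b (Finset.mem_insert_of_mem hb))

lemma Good.div2t {G : ℝ → EuclideanSpace ℝ (Fin n) → ℝ} (h : Good G) :
    Good (fun t x => G t x / (2 * t)) := by
  simpa only [div_eq_mul_inv] using h.mul Good.inv2t

lemma Adm.M_good (hf : Adm f) {p : EuclideanSpace ℝ (Fin n) → ℝ} (hp : Continuous p) :
    Good (M f p) := by
  refine ⟨fun t ht => continuous_iff_continuousAt.2 fun x => HasFDerivAt.continuousAt (hf.M_hasD hp ht x),
    fun a b _ => ?_⟩
  obtain ⟨C, hC, h⟩ := hf.M_bound hp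
  exact ⟨C, 0, hC, le_rfl, fun t _ x => by simpa using h t x⟩

lemma Adm.L_good (hf : Adm f) : Good (L f) := by
  refine ⟨fun t ht => continuous_iff_continuousAt.2 fun x => HasFDerivAt.continuousAt (hf.L_hasD ht x),
    fun a b ha => ?_⟩
  obtain ⟨R, hR, h⟩ := hf.Z_bounds
  refine ⟨(n : ℝ) / 2 * (|Real.log (4 * π * a)| + |Real.log (4 * π * b)|) + 2 * Real.exp R / (4 * a), 1,
    by positivity, zero_le_one, fun t ht x => ?_⟩
  have hta := ht.1
  have htb := ht.2
  have ht0 : 0 < t := by linarith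
  have hZ := hf.Zpos t x
  obtain ⟨h1, h2⟩ := h t ht0 x
  have h3 : -(‖x‖ + R) ^ 2 / (4 * t) ≤ Real.log (Zw n f t x) := by
    rwa [Real.le_log_iff_exp_le hZ]
  have h4 : Real.log (Zw n f t x) ≤ -(‖x‖ ^ 2 / 2 - R ^ 2) / (4 * t) := by
    rwa [Real.log_le_iff_le_exp hZ]
  have h5 : |Real.log (Zw n f t x)| ≤ (‖x‖ + R) ^ 2 / (4 * t) := by
    rw [abs_le]
    refine ⟨by rwa [← neg_div], h4.trans ?_⟩
    gcongr
    nlinarith [norm_nonneg x]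
  have h6 : (‖x‖ + R) ^ 2 / (4 * t) ≤ 2 * (Real.exp R * Real.exp ‖x‖) / (4 * a) := by
    have h7 := Real.quadratic_le_exp_of_nonneg (x := ‖x‖ + R) (by positivity)
    rw [Real.exp_add] at h7
    have := norm_nonneg x
    gcongr
    nlinarith
  have h8 : |Real.log (4 * π * t)| ≤ |Real.log (4 * π * a)| + |Real.log (4 * π * b)| := by
    have ha' : 0 < 4 * π * a := by positivity
    have l1 : Real.log (4 * π * a) ≤ Real.log (4 * π * t) := Real.log_le_log ha' (by gcongr)
    have l2 : Real.log (4 * π * t) ≤ Real.log (4 * π * b) :=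
      Real.log_le_log (by positivity) (by gcongr)
    rw [abs_le]
    constructor
    · linarith [neg_abs_le (Real.log (4 * π * a)), abs_nonneg (Real.log (4 * π * b))]
    · linarith [le_abs_self (Real.log (4 * π * b)), abs_nonneg (Real.log (4 * π * a))]
  have h9 : 1 ≤ Real.exp ‖x‖ := Real.one_le_exp (norm_nonneg x)
  rw [hf.L_eq ht0, one_mul]
  calc |-(n : ℝ) / 2 * Real.log (4 * π * t) + Real.log (Zw n f t x)|
      ≤ |-(n : ℝ) / 2 * Real.log (4 * π * t)| + |Real.log (Zw n f t x)| := abs_add_le _ _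
    _ = (n : ℝ) / 2 * |Real.log (4 * π * t)| + |Real.log (Zw n f t x)| := by
      rw [abs_mul, neg_div, abs_neg, abs_of_nonneg (by positivity : (0 : ℝ) ≤ n / 2)]
    _ ≤ (n : ℝ) / 2 * (|Real.log (4 * π * a)| + |Real.log (4 * π * b)|) * Real.exp ‖x‖
        + 2 * (Real.exp R * Real.exp ‖x‖) / (4 * a) := by
      refine add_le_add ?_ (h5.trans h6)
      have : (n : ℝ) / 2 * |Real.log (4 * π * t)| ≤
        (n : ℝ) / 2 * (|Real.log (4 * π * a)| + |Real.log (4 * π * b)|) := by gcongr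
      exact this.trans (le_mul_of_one_le_right (by positivity) h9)
    _ = _ := by ring

lemma integrable_gaussian {c : ℝ} (hb : 0 < c) :
    Integrable (fun v : EuclideanSpace ℝ (Fin n) => Real.exp (-c * ‖v‖ ^ 2)) := by
  have := integrable_of_integral_eq_one (f := fun v : EuclideanSpace ℝ (Fin n) =>
    (π / c) ^ (-(Module.finrank ℝ (EuclideanSpace ℝ (Fin n)) / 2 : ℝ)) * Real.exp (-c * ‖v‖ ^ 2)) (by
      rw [integral_const_mul, GaussianFourier.integral_rexp_neg_mul_sq_norm hb, ← Real.rpow_add (by positivity)]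
      simp)
  rwa [integrable_const_mul_iff (IsUnit.mk0 _ (by positivity))] at this

lemma Adm.dominated (hf : Adm f) {G : ℝ → EuclideanSpace ℝ (Fin n) → ℝ} (hG : Good G) {a b : ℝ}
    (ha : 0 < a) (hab : a ≤ b) : ∃ bound : EuclideanSpace ℝ (Fin n) → ℝ, Integrable bound ∧
      ∀ t ∈ Set.Icc a b, ∀ x, |heatSol n f t x * G t x| ≤ bound x := by
  obtain ⟨C, B, hC, hB, hbd⟩ := hG.bd a b ha
  obtain ⟨R, hR, h⟩ := hf.Z_bounds
  have hb : 0 < b := by linarith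
  refine ⟨fun x => (4 * π * a) ^ (-(n : ℝ) / 2) * Real.exp (R ^ 2 / (4 * a)) * C * Real.exp (4 * b * B ^ 2)
    * Real.exp (-(1 / (16 * b)) * ‖x‖ ^ 2), (integrable_gaussian (by positivity)).const_mul _, fun t ht x => ?_⟩
  have hta := ht.1
  have htb := ht.2
  have ht0 : 0 < t := by linarith
  have hZ := hf.Zpos t x
  obtain ⟨-, h2⟩ := h t ht0 x
  rw [abs_mul, abs_of_pos (hf.heat_pos ht0 x), heatSol_eq]
  have e1 : (4 * π * t) ^ (-(n : ℝ) / 2) ≤ (4 * π * a) ^ (-(n : ℝ) / 2) := by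
    apply Real.rpow_le_rpow_of_nonpos (by positivity) (by gcongr)
    apply div_nonpos_of_nonpos_of_nonneg <;> simp
  have e2 : Zw n f t x ≤ Real.exp (R ^ 2 / (4 * a)) * Real.exp (-‖x‖ ^ 2 / (8 * b)) := by
    refine h2.trans ?_
    rw [← Real.exp_add, Real.exp_le_exp]
    have i1 : R ^ 2 / (4 * t) ≤ R ^ 2 / (4 * a) := by gcongr
    have i2 : ‖x‖ ^ 2 / (8 * b) ≤ ‖x‖ ^ 2 / (8 * t) := by gcongr
    have i3 : -(‖x‖ ^ 2 / 2 - R ^ 2) / (4 * t) = R ^ 2 / (4 * t) - ‖x‖ ^ 2 / (8 * t) := by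
      field_simp
      ring
    rw [i3, neg_div]
    linarith
  have e3 : Real.exp (-‖x‖ ^ 2 / (8 * b)) * Real.exp (B * ‖x‖) ≤
      Real.exp (4 * b * B ^ 2) * Real.exp (-(1 / (16 * b)) * ‖x‖ ^ 2) := by
    rw [← Real.exp_add, ← Real.exp_add, Real.exp_le_exp]
    have : 4 * b * B ^ 2 + -(1 / (16 * b)) * ‖x‖ ^ 2 - (-‖x‖ ^ 2 / (8 * b) + B * ‖x‖)
      = (‖x‖ - 8 * b * B) ^ 2 / (16 * b) := by
      field_simp
      ring
    have h0 : 0 ≤ (‖x‖ - 8 * b * B) ^ 2 / (16 * b) := by positivity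
    linarith
  calc (4 * π * t) ^ (-(n : ℝ) / 2) * Zw n f t x * |G t x|
      ≤ (4 * π * a) ^ (-(n : ℝ) / 2) * (Real.exp (R ^ 2 / (4 * a)) * Real.exp (-‖x‖ ^ 2 / (8 * b)))
        * (C * Real.exp (B * ‖x‖)) := by
        gcongr
        exact hbd t ht x
    _ = (4 * π * a) ^ (-(n : ℝ) / 2) * Real.exp (R ^ 2 / (4 * a)) * C *
        (Real.exp (-‖x‖ ^ 2 / (8 * b)) * Real.exp (B * ‖x‖)) := by ring
    _ ≤ (4 * π * a) ^ (-(n : ℝ) / 2) * Real.exp (R ^ 2 / (4 * a)) * C *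
        (Real.exp (4 * b * B ^ 2) * Real.exp (-(1 / (16 * b)) * ‖x‖ ^ 2)) := by gcongr
    _ = _ := by ring

lemma Adm.heat_hasD (hf : Adm f) {t : ℝ} (ht : 0 < t) (x : EuclideanSpace ℝ (Fin n)) :
    HasD (heatSol n f t) (fun i => heatSol n f t x * ((M f (fun y => y i) t x - x i) / (2 * t))) x := by
  have := HasD.comp (Real.hasDerivAt_exp _) (hf.L_hasD ht x)
  have e : (fun y => Real.exp (L f t y)) = heatSol n f t := funext fun y => hf.exp_L ht y
  rw [e, hf.exp_L ht] at this
  exact this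

lemma Adm.heat_cont (hf : Adm f) {t : ℝ} (ht : 0 < t) : Continuous (heatSol n f t) :=
  continuous_iff_continuousAt.2 fun x => HasFDerivAt.continuousAt (hf.heat_hasD ht x)

lemma Adm.integrable (hf : Adm f) {G : ℝ → EuclideanSpace ℝ (Fin n) → ℝ} (hG : Good G) {t : ℝ}
    (ht : 0 < t) : Integrable (fun x => heatSol n f t x * G t x) := by
  obtain ⟨bound, h1, h2⟩ := hf.dominated hG ht le_rfl
  exact h1.mono' ((hf.heat_cont ht).mul (hG.cont t ht)).aestronglyMeasurable
    (Eventually.of_forall fun x => h2 t ⟨le_rfl, le_rfl⟩ x)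

/-- Integration by parts against the heat solution. -/
lemma Adm.ibp (hf : Adm f) {G : ℝ → EuclideanSpace ℝ (Fin n) → ℝ}
    {D : Fin n → ℝ → EuclideanSpace ℝ (Fin n) → ℝ} (hG : Good G) (k : Fin n) (hD : Good (D k))
    {t : ℝ} (ht : 0 < t) (h : ∀ x, HasD (G t) (fun i => D i t x) x) :
    ∫ x, heatSol n f t x * (D k t x + (M f (fun y => y k) t x - x k) / (2 * t) * G t x) = 0 := by
  have hl : Good (fun t x => (M f (fun y => y k) t x - x k) / (2 * t)) :=
    ((hf.M_good (by fun_prop)).sub (Good.coord k)).div2t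
  have key := integral_bilinear_hasFDerivAt_right_eq_neg_left_of_integrable (μ := volume)
    (f := fun _ : EuclideanSpace ℝ (Fin n) => (1 : ℝ)) (f' := fun _ => 0)
    (g := fun x => heatSol n f t x * G t x)
    (g' := fun x => ∑ i, (heatSol n f t x * D i t x +
      heatSol n f t x * ((M f (fun y => y i) t x - x i) / (2 * t)) * G t x) •
      (EuclideanSpace.proj i : EuclideanSpace ℝ (Fin n) →L[ℝ] ℝ))
    (v := EuclideanSpace.single k 1) (B := ContinuousLinearMap.mul ℝ ℝ)
  have e : ∀ x, (∑ i, (heatSol n f t x * D i t x +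
      heatSol n f t x * ((M f (fun y => y i) t x - x i) / (2 * t)) * G t x) •
      (EuclideanSpace.proj i : EuclideanSpace ℝ (Fin n) →L[ℝ] ℝ)) (EuclideanSpace.single k 1)
      = heatSol n f t x * (D k t x + (M f (fun y => y k) t x - x k) / (2 * t) * G t x) := by
    intro x
    simp
    ring
  simp only [e, ContinuousLinearMap.mul_apply', one_mul, zero_apply, zero_mul,
    integral_zero, neg_zero] at key
  refine key (integrable_zero _ _ _) (hf.integrable (hD.add (hl.mul hG)) ht) (hf.integrable hG ht)
    (fun x _ => hasFDerivAt_const _ _) (fun x _ => ?_)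
  exact (hf.heat_hasD ht x).mul (h x)

/-- First derivatives of `log u`. -/
noncomputable def ell (f : EuclideanSpace ℝ (Fin n) → ℝ) (i : Fin n) (t : ℝ)
    (x : EuclideanSpace ℝ (Fin n)) : ℝ :=
  (M f (fun y => y i) t x - x i) / (2 * t)

/-- Second derivatives of `log u`. -/
noncomputable def hes (f : EuclideanSpace ℝ (Fin n) → ℝ) (i k : Fin n) (t : ℝ)
    (x : EuclideanSpace ℝ (Fin n)) : ℝ :=
  ((M f (fun y => y k * y i) t x - M f (fun y => y i) t x * M f (fun y => y k) t x) / (2 * t)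
    - (if i = k then 1 else 0)) / (2 * t)

/-- Third derivatives of `log u`. -/
noncomputable def trd (f : EuclideanSpace ℝ (Fin n) → ℝ) (i j k : Fin n) (t : ℝ)
    (x : EuclideanSpace ℝ (Fin n)) : ℝ :=
  ((M f (fun y => y k * (y j * y i)) t x - M f (fun y => y j * y i) t x * M f (fun y => y k) t x)
    / (2 * t) -
    (M f (fun y => y i) t x * ((M f (fun y => y k * y j) t x
      - M f (fun y => y j) t x * M f (fun y => y k) t x) / (2 * t))
    + (M f (fun y => y k * y i) t x
      - M f (fun y => y i) t x * M f (fun y => y k) t x) / (2 * t) * M f (fun y => y j) t x))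
      / (2 * t) / (2 * t)

lemma Adm.ell_good (hf : Adm f) (i : Fin n) : Good (ell f i) :=
  ((hf.M_good (by fun_prop)).sub (Good.coord i)).div2t

lemma Adm.hes_good (hf : Adm f) (i k : Fin n) : Good (hes f i k) :=
  ((((hf.M_good (by fun_prop)).sub ((hf.M_good (by fun_prop)).mul (hf.M_good (by fun_prop)))).div2t).sub
    (Good.const _)).div2t

lemma Adm.trd_good (hf : Adm f) (i j k : Fin n) : Good (trd f i j k) := by
  have h1 : ∀ i, Good (M f (fun y => y i)) := fun i => hf.M_good (by fun_prop)
  have h2 : ∀ i j, Good (M f (fun y => y i * y j)) := fun i j => hf.M_good (by fun_prop)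
  have h3 : ∀ i j k, Good (M f (fun y => y i * (y j * y k))) := fun i j k => hf.M_good (by fun_prop)
  exact ((((h3 k j i).sub ((h2 j i).mul (h1 k))).div2t).sub
    (((h1 i).mul ((h2 k j).sub ((h1 j).mul (h1 k))).div2t).add
      ((((h2 k i).sub ((h1 i).mul (h1 k))).div2t).mul (h1 j)))).div2t.div2t

lemma HasD.divc {g : EuclideanSpace ℝ (Fin n) → ℝ} {D : Fin n → ℝ}
    {x : EuclideanSpace ℝ (Fin n)} (h : HasD g D x) (c : ℝ) :
    HasD (fun y => g y / c) (fun i => D i / c) x := by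
  simp only [div_eq_mul_inv]
  refine (h.mul (HasD.const c⁻¹ x)).congr fun i => ?_
  simp

lemma Adm.ell_hasD (hf : Adm f) (i : Fin n) {t : ℝ} (ht : 0 < t) (x : EuclideanSpace ℝ (Fin n)) :
    HasD (ell f i t) (fun k => hes f i k t x) x :=
  ((hf.M_hasD (by fun_prop) ht x).sub (HasD.coord i x)).divc (2 * t)

lemma Adm.hes_hasD (hf : Adm f) (i j : Fin n) {t : ℝ} (ht : 0 < t) (x : EuclideanSpace ℝ (Fin n)) :
    HasD (hes f i j t) (fun k => trd f i j k t x) x := by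
  have h1 : ∀ i, HasD (M f (fun y => y i) t) _ x := fun i => hf.M_hasD (by fun_prop) ht x
  have h2 : HasD (M f (fun y => y j * y i) t) _ x := hf.M_hasD (by fun_prop) ht x
  refine ((((h2.sub ((h1 i).mul (h1 j))).divc (2 * t)).sub
    (HasD.const (if i = j then 1 else 0) x)).divc (2 * t)).congr fun k => ?_
  simp only [trd]
  ring

lemma Adm.L_hasD' (hf : Adm f) {t : ℝ} (ht : 0 < t) (x : EuclideanSpace ℝ (Fin n)) :
    HasD (L f t) (fun k => ell f k t x) x := hf.L_hasD ht x

/-- Time derivative of `log u`. -/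
noncomputable def Lt (f : EuclideanSpace ℝ (Fin n) → ℝ) (t : ℝ)
    (x : EuclideanSpace ℝ (Fin n)) : ℝ :=
  ∑ k, (hes f k k t x + ell f k t x * ell f k t x)

/-- Time derivative of `ell`. -/
noncomputable def ellt (f : EuclideanSpace ℝ (Fin n) → ℝ) (i : Fin n) (t : ℝ)
    (x : EuclideanSpace ℝ (Fin n)) : ℝ :=
  ∑ k, (trd f i k k t x + 2 * (ell f k t x * hes f i k t x))

lemma Adm.Lt_good (hf : Adm f) : Good (Lt f) :=
  Good.sum _ fun k _ => (hf.hes_good k k).add ((hf.ell_good k).mul (hf.ell_good k))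

lemma Adm.ellt_good (hf : Adm f) (i : Fin n) : Good (ellt f i) :=
  Good.sum _ fun k _ => (hf.trd_good i k k).add
    ((Good.const 2).mul ((hf.ell_good k).mul (hf.hes_good i k)))

lemma Adm.L_hasDerivAt' (hf : Adm f) {t : ℝ} (ht : 0 < t) (x : EuclideanSpace ℝ (Fin n)) :
    HasDerivAt (fun t => L f t x) (Lt f t x) t := by
  convert! hf.L_hasDerivAt ht x using 1
  refine Finset.sum_congr rfl fun k _ => ?_
  simp only [hes, ell, if_true]
  field_simp
  ring

lemma Adm.ell_hasDerivAt (hf : Adm f) (i : Fin n) {t : ℝ} (ht : 0 < t)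
    (x : EuclideanSpace ℝ (Fin n)) :
    HasDerivAt (fun t => ell f i t x) (ellt f i t x) t := by
  have h1 : HasDerivAt (fun t => M f (fun y => y i) t x) _ t := hf.M_hasDerivAt (by fun_prop) ht x
  have h2 : HasDerivAt (fun t : ℝ => 2 * t) 2 t := by
    simpa using (hasDerivAt_id t).const_mul 2
  have h3 := (h1.sub_const (x i)).fun_div h2 (by positivity)
  convert! h3 using 1
  have e : (M f (fun y => y i) t x - x i) * 2 =
      ∑ k, (if i = k then 2 * (M f (fun y => y k) t x - x k) else 0) := by
    simp
    ring
  rw [e, Finset.sum_div, Finset.sum_mul, ← Finset.sum_sub_distrib, Finset.sum_div]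
  refine Finset.sum_congr rfl fun k _ => ?_
  simp only [trd, hes, ell]
  have hc : M f (fun y => y k * y i) t x = M f (fun y => y i * y k) t x := by
    congr 1
    funext y
    ring
  split_ifs with hik
  · field_simp
    ring
  · field_simp
    ring

lemma Adm.heat_hasDerivAt (hf : Adm f) {t : ℝ} (ht : 0 < t) (x : EuclideanSpace ℝ (Fin n)) :
    HasDerivAt (fun t => heatSol n f t x) (heatSol n f t x * Lt f t x) t := by
  have h := (hf.L_hasDerivAt' ht x).exp
  rw [hf.exp_L ht] at h
  refine h.congr_of_eventuallyEq ?_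
  filter_upwards [Ioi_mem_nhds ht] with s hs using (hf.exp_L hs x).symm

/-- Differentiation under the integral sign. -/
lemma Adm.time_deriv (hf : Adm f) {G G' : ℝ → EuclideanSpace ℝ (Fin n) → ℝ} (hG : Good G)
    (hG' : Good G') (h : ∀ t, 0 < t → ∀ x, HasDerivAt (fun t => G t x) (G' t x) t)
    {t : ℝ} (ht : 0 < t) :
    HasDerivAt (fun t => ∫ x, heatSol n f t x * G t x)
      (∫ x, heatSol n f t x * (Lt f t x * G t x + G' t x)) t := by
  have hgood := (hf.Lt_good.mul hG).add hG'
  obtain ⟨bound, hb1, hb2⟩ := hf.dominated hgood (half_pos ht) (by linarith : t / 2 ≤ 2 * t)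
  have hmem : Set.Icc (t / 2) (2 * t) ∈ 𝓝 t := Icc_mem_nhds (by linarith) (by linarith)
  refine (hasDerivAt_integral_of_dominated_loc_of_deriv_le (𝕜 := ℝ) (μ := volume)
    (F := fun t x => heatSol n f t x * G t x)
    (F' := fun t x => heatSol n f t x * (Lt f t x * G t x + G' t x))
    (bound := bound) hmem ?_ (hf.integrable hG ht)
    ((hf.heat_cont ht).mul (hgood.cont t ht)).aestronglyMeasurable
    (Eventually.of_forall fun x s hs => hb2 s hs x) hb1
    (Eventually.of_forall fun x s hs => ?_)).2
  · filter_upwards [Ioi_mem_nhds ht] with s hs using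
      ((hf.heat_cont hs).mul (hG.cont s hs)).aestronglyMeasurable
  · have hs0 : 0 < s := by linarith [hs.1]
    convert! (hf.heat_hasDerivAt hs0 x).mul (h s hs0 x) using 1
    ring

/-- Integrable functions with zero integral. -/
def Null (g : EuclideanSpace ℝ (Fin n) → ℝ) : Prop := Integrable g ∧ ∫ x, g x = 0

lemma Null.add {g g' : EuclideanSpace ℝ (Fin n) → ℝ} (h : Null g) (h' : Null g') :
    Null (fun x => g x + g' x) :=
  ⟨h.1.add h'.1, by rw [integral_add h.1 h'.1, h.2, h'.2, add_zero]⟩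

lemma Null.const_mul {g : EuclideanSpace ℝ (Fin n) → ℝ} (c : ℝ) (h : Null g) :
    Null (fun x => c * g x) :=
  ⟨h.1.const_mul c, by rw [integral_const_mul, h.2, mul_zero]⟩

lemma Null.sum {ι : Type*} (s : Finset ι) {g : ι → EuclideanSpace ℝ (Fin n) → ℝ}
    (h : ∀ a ∈ s, Null (g a)) : Null (fun x => ∑ a ∈ s, g a x) :=
  ⟨integrable_finsetSum _ fun a ha => (h a ha).1, by
    rw [integral_finsetSum _ fun a ha => (h a ha).1]
    exact Finset.sum_eq_zero fun a ha => (h a ha).2⟩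

lemma Adm.null (hf : Adm f) {G : ℝ → EuclideanSpace ℝ (Fin n) → ℝ}
    {D : Fin n → ℝ → EuclideanSpace ℝ (Fin n) → ℝ} (hG : Good G) (k : Fin n) (hD : Good (D k))
    {t : ℝ} (ht : 0 < t) (h : ∀ x, HasD (G t) (fun i => D i t x) x) :
    Null (fun x => heatSol n f t x * (D k t x + ell f k t x * G t x)) :=
  ⟨hf.integrable (hD.add ((hf.ell_good k).mul hG)) ht, hf.ibp hG k hD ht h⟩

/-- Squared gradient of `log u`. -/
noncomputable def S (f : EuclideanSpace ℝ (Fin n) → ℝ) (t : ℝ)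
    (x : EuclideanSpace ℝ (Fin n)) : ℝ := ∑ i, ell f i t x * ell f i t x

/-- Laplacian of `log u`. -/
noncomputable def Lap (f : EuclideanSpace ℝ (Fin n) → ℝ) (t : ℝ)
    (x : EuclideanSpace ℝ (Fin n)) : ℝ := ∑ i, hes f i i t x

/-- Squared Hessian of `log u`. -/
noncomputable def Hsq (f : EuclideanSpace ℝ (Fin n) → ℝ) (t : ℝ)
    (x : EuclideanSpace ℝ (Fin n)) : ℝ := ∑ i, ∑ k, hes f i k t x * hes f i k t x

lemma Adm.S_good (hf : Adm f) : Good (S f) :=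
  Good.sum _ fun k _ => (hf.ell_good k).mul (hf.ell_good k)

lemma Adm.Lap_good (hf : Adm f) : Good (Lap f) :=
  Good.sum _ fun k _ => hf.hes_good k k

lemma Adm.Hsq_good (hf : Adm f) : Good (Hsq f) :=
  Good.sum _ fun i _ => Good.sum _ fun k _ => (hf.hes_good i k).mul (hf.hes_good i k)

lemma Adm.entropy_deriv (hf : Adm f) {t : ℝ} (ht : 0 < t) :
    HasDerivAt (shannonEntropy n f) (∫ x, heatSol n f t x * S f t x) t := by
  have h1 := (hf.time_deriv hf.L_good hf.Lt_good (fun t ht x => hf.L_hasDerivAt' ht x) ht).neg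
  convert! h1 using 1
  have n1 : ∀ k, Null (fun x => heatSol n f t x *
      (L f t x * hes f k k t x + ell f k t x * ell f k t x + ell f k t x * (L f t x * ell f k t x))) :=
    fun k => hf.null (G := fun t x => L f t x * ell f k t x)
      (D := fun i t x => L f t x * hes f k i t x + ell f i t x * ell f k t x)
      (hf.L_good.mul (hf.ell_good k)) k
      ((hf.L_good.mul (hf.hes_good k k)).add ((hf.ell_good k).mul (hf.ell_good k))) ht
      (fun x => (hf.L_hasD' ht x).mul (hf.ell_hasD k ht x))
  have n2 : ∀ k, Null (fun x => heatSol n f t x *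
      (hes f k k t x + ell f k t x * ell f k t x)) :=
    fun k => hf.null (G := fun t x => ell f k t x) (D := fun i t x => hes f k i t x)
      (hf.ell_good k) k (hf.hes_good k k) ht (fun x => hf.ell_hasD k ht x)
  have n3 := (Null.sum Finset.univ fun k _ => n1 k).add (Null.sum Finset.univ fun k _ => n2 k)
  have e : ∀ x, heatSol n f t x * (Lt f t x * L f t x + Lt f t x) =
      (∑ k, heatSol n f t x * (L f t x * hes f k k t x + ell f k t x * ell f k t x
        + ell f k t x * (L f t x * ell f k t x)) +
      ∑ k, heatSol n f t x * (hes f k k t x + ell f k t x * ell f k t x))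
      - heatSol n f t x * S f t x := by
    intro x
    simp only [Lt, S, Finset.mul_sum, Finset.sum_mul, ← Finset.sum_add_distrib,
      ← Finset.sum_sub_distrib]
    exact Finset.sum_congr rfl fun k _ => by ring
  simp only [e]
  rw [integral_sub n3.1 (hf.integrable hf.S_good ht), n3.2]
  ring

lemma Adm.int_S (hf : Adm f) {t : ℝ} (ht : 0 < t) :
    ∫ x, heatSol n f t x * S f t x = - ∫ x, heatSol n f t x * Lap f t x := by
  have n2 : ∀ k, Null (fun x => heatSol n f t x *
      (hes f k k t x + ell f k t x * ell f k t x)) :=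
    fun k => hf.null (G := fun t x => ell f k t x) (D := fun i t x => hes f k i t x)
      (hf.ell_good k) k (hf.hes_good k k) ht (fun x => hf.ell_hasD k ht x)
  have n3 := (Null.sum Finset.univ fun k _ => n2 k)
  have e : ∀ x, heatSol n f t x * S f t x =
      ∑ k, heatSol n f t x * (hes f k k t x + ell f k t x * ell f k t x)
      - heatSol n f t x * Lap f t x := by
    intro x
    simp only [Lap, S, Finset.mul_sum, ← Finset.sum_sub_distrib]
    exact Finset.sum_congr rfl fun k _ => by ring
  simp only [e]
  rw [integral_sub n3.1 (hf.integrable hf.Lap_good ht), n3.2]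
  ring

lemma Adm.entropy_deriv2 (hf : Adm f) {t : ℝ} (ht : 0 < t) :
    HasDerivAt (deriv (shannonEntropy n f)) (-2 * ∫ x, heatSol n f t x * Hsq f t x) t := by
  have h1 := hf.time_deriv hf.S_good
    (G' := fun t x => ∑ i, (ellt f i t x * ell f i t x + ell f i t x * ellt f i t x))
    (Good.sum _ fun i _ => ((hf.ellt_good i).mul (hf.ell_good i)).add
      ((hf.ell_good i).mul (hf.ellt_good i)))
    (fun t ht x => by
      unfold S
      exact HasDerivAt.fun_sum fun i _ => (hf.ell_hasDerivAt i ht x).mul (hf.ell_hasDerivAt i ht x)) ht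
  have h2 : deriv (shannonEntropy n f) =ᶠ[𝓝 t] fun t => ∫ x, heatSol n f t x * S f t x := by
    filter_upwards [Ioi_mem_nhds ht] with s hs using (hf.entropy_deriv hs).deriv
  refine HasDerivAt.congr_of_eventuallyEq ?_ h2
  convert! h1 using 1
  have n1 : ∀ k, Null (fun x => heatSol n f t x *
      ((ell f k t x * (∑ i, (ell f i t x * hes f i k t x + hes f i k t x * ell f i t x))
        + hes f k k t x * S f t x) + ell f k t x * (ell f k t x * S f t x))) :=
    fun k => hf.null (G := fun t x => ell f k t x * S f t x)
      (D := fun j t x => ell f k t x * (∑ i, (ell f i t x * hes f i j t x + hes f i j t x * ell f i t x))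
        + hes f k j t x * S f t x)
      ((hf.ell_good k).mul hf.S_good) k
      (((hf.ell_good k).mul (Good.sum _ fun i _ => ((hf.ell_good i).mul (hf.hes_good i k)).add
        ((hf.hes_good i k).mul (hf.ell_good i)))).add ((hf.hes_good k k).mul hf.S_good)) ht
      (fun x => (hf.ell_hasD k ht x).mul
        (HasD.sum _ fun i _ => (hf.ell_hasD i ht x).mul (hf.ell_hasD i ht x)))
  have n2 : ∀ i k, Null (fun x => heatSol n f t x *
      ((ell f i t x * trd f i k k t x + hes f i k t x * hes f i k t x)
        + ell f k t x * (ell f i t x * hes f i k t x))) :=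
    fun i k => hf.null (G := fun t x => ell f i t x * hes f i k t x)
      (D := fun j t x => ell f i t x * trd f i k j t x + hes f i j t x * hes f i k t x)
      ((hf.ell_good i).mul (hf.hes_good i k)) k
      (((hf.ell_good i).mul (hf.trd_good i k k)).add ((hf.hes_good i k).mul (hf.hes_good i k))) ht
      (fun x => (hf.ell_hasD i ht x).mul (hf.hes_hasD i k ht x))
  have n3 := (Null.sum Finset.univ fun k _ => n1 k).add
    ((Null.sum Finset.univ fun i _ => Null.sum Finset.univ fun k _ => n2 i k).const_mul 2)
  have e : ∀ x, heatSol n f t x * (Lt f t x * S f t x +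
        ∑ i, (ellt f i t x * ell f i t x + ell f i t x * ellt f i t x)) =
      (∑ k, heatSol n f t x *
      ((ell f k t x * (∑ i, (ell f i t x * hes f i k t x + hes f i k t x * ell f i t x))
        + hes f k k t x * S f t x) + ell f k t x * (ell f k t x * S f t x)) +
      2 * ∑ i, ∑ k, heatSol n f t x *
      ((ell f i t x * trd f i k k t x + hes f i k t x * hes f i k t x)
        + ell f k t x * (ell f i t x * hes f i k t x)))
      + -2 * (heatSol n f t x * Hsq f t x) := by
    intro x
    have a1 : Lt f t x * S f t x = ∑ k, (hes f k k t x * S f t x + ell f k t x * (ell f k t x * S f t x)) := by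
      rw [Lt, Finset.sum_mul]
      exact Finset.sum_congr rfl fun k _ => by ring
    have a2 : ∑ i, (ellt f i t x * ell f i t x + ell f i t x * ellt f i t x) =
        ∑ i, ∑ k, (2 * (ell f i t x * trd f i k k t x) + 4 * (ell f k t x * (ell f i t x * hes f i k t x))) := by
      refine Finset.sum_congr rfl fun i _ => ?_
      rw [ellt, Finset.sum_mul, Finset.mul_sum, ← Finset.sum_add_distrib]
      exact Finset.sum_congr rfl fun k _ => by ring
    have a3 : ∑ k, ell f k t x * (∑ i, (ell f i t x * hes f i k t x + hes f i k t x * ell f i t x)) =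
        ∑ i, ∑ k, 2 * (ell f k t x * (ell f i t x * hes f i k t x)) := by
      simp only [Finset.mul_sum]
      rw [Finset.sum_comm]
      exact Finset.sum_congr rfl fun i _ => Finset.sum_congr rfl fun k _ => by ring
    rw [a1, a2]
    simp only [Hsq, ← Finset.mul_sum]
    have a4 : ∑ k, ((ell f k t x * (∑ i, (ell f i t x * hes f i k t x + hes f i k t x * ell f i t x))
        + hes f k k t x * S f t x) + ell f k t x * (ell f k t x * S f t x)) =
        ∑ k, (hes f k k t x * S f t x + ell f k t x * (ell f k t x * S f t x)) +
        ∑ i, ∑ k, 2 * (ell f k t x * (ell f i t x * hes f i k t x)) := by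
      rw [← a3, ← Finset.sum_add_distrib]
      exact Finset.sum_congr rfl fun k _ => by ring
    rw [a4]
    simp only [Finset.sum_add_distrib, ← Finset.mul_sum]
    ring
  simp only [e]
  rw [integral_add n3.1 ((hf.integrable hf.Hsq_good ht).const_mul _), n3.2, integral_const_mul]
  ring

lemma Adm.hessian_eq (hf : Adm f) {t : ℝ} (ht : 0 < t) (x : EuclideanSpace ℝ (Fin n)) (i j : Fin n) :
    hessianMatrix n (fun y => Real.log (heatSol n f t y)) x i j = hes f j i t x := by
  have e1 : fderiv ℝ (fun y => Real.log (heatSol n f t y)) = fun x => ∑ m, ell f m t x •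
      (EuclideanSpace.proj m : EuclideanSpace ℝ (Fin n) →L[ℝ] ℝ) :=
    funext fun x => HasFDerivAt.fderiv (hf.L_hasD' ht x)
  have e2 := HasFDerivAt.fun_sum (u := Finset.univ) fun m _ => HasFDerivAt.smul_const (hf.ell_hasD m ht x)
    (EuclideanSpace.proj m : EuclideanSpace ℝ (Fin n) →L[ℝ] ℝ)
  rw [hessianMatrix, iteratedFDeriv_two_apply, e1, e2.fderiv]
  simp

lemma Adm.laplacian_eq (hf : Adm f) {t : ℝ} (ht : 0 < t) (x : EuclideanSpace ℝ (Fin n)) :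
    laplacian n (fun y => Real.log (heatSol n f t y)) x = Lap f t x := by
  simp only [laplacian, hf.hessian_eq ht, Lap]

lemma Adm.traceFree_eq (hf : Adm f) (hn : 1 ≤ n) {t : ℝ} (ht : 0 < t) (x : EuclideanSpace ℝ (Fin n)) :
    traceFreeHessianHSsq n (fun y => Real.log (heatSol n f t y)) x
      = Hsq f t x - 1 / (n : ℝ) * (Lap f t x * Lap f t x) := by
  have hn' : (n : ℝ) ≠ 0 := by positivity
  simp only [traceFreeHessianHSsq, hf.hessian_eq ht, hf.laplacian_eq ht]
  rw [Finset.sum_comm]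
  have e : ∀ i j : Fin n, (hes f i j t x - Lap f t x / n * (if j = i then 1 else 0)) ^ 2 =
      hes f i j t x * hes f i j t x - (if j = i then 2 * (Lap f t x / n) * hes f i j t x
        - (Lap f t x / n) ^ 2 else 0) := by
    intro i j
    split_ifs <;> ring
  simp only [e, Finset.sum_sub_distrib, Finset.sum_ite_eq', Finset.mem_univ, if_true, ← Finset.mul_sum]
  rw [← Lap, ← Hsq, Finset.sum_const, Finset.card_univ, Fintype.card_fin, nsmul_eq_mul]
  field_simp
  ring

end NIW

/-- Formula (5.10) of the paper in the Euclidean case: along the heat flow on `ℝⁿ`,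
`H'' + (2/n)H'² = -(2/n)·Var_{u dx}(Δ log u) - 2∫‖(∇² log u)₀‖²_HS u dx`. -/
theorem NIW_euclidean_formula (n : ℕ) (hn : 1 ≤ n)
    (f : EuclideanSpace ℝ (Fin n) → ℝ)
    (hf_cont : Continuous f) (hf_nonneg : ∀ x, 0 ≤ f x)
    (hf_supp : HasCompactSupport f)
    (hf_int : ∫ x, f x = 1) :
    ∀ t : ℝ, 0 < t →
      deriv (deriv (shannonEntropy n f)) t
          + (2 / (n : ℝ)) * (deriv (shannonEntropy n f) t) ^ 2 =
        -(2 / (n : ℝ)) * (∫ x, (laplacian n (fun y => Real.log (heatSol n f t y)) x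
            - ∫ z, laplacian n (fun y => Real.log (heatSol n f t y)) z * heatSol n f t z) ^ 2
              * heatSol n f t x)
          - 2 * ∫ x, traceFreeHessianHSsq n (fun y => Real.log (heatSol n f t y)) x
              * heatSol n f t x := by
  intro t ht
  have hf : NIW.Adm f := ⟨hf_cont, hf_nonneg, hf_supp, hf_int⟩
  have hn' : (n : ℝ) ≠ 0 := by positivity
  simp only [hf.laplacian_eq ht, hf.traceFree_eq hn ht]
  rw [(hf.entropy_deriv2 ht).deriv, (hf.entropy_deriv ht).deriv, hf.int_S ht]
  have i0 : Integrable (fun x => heatSol n f t x) := by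
    simpa using hf.integrable (NIW.Good.const 1) ht
  have i1 := hf.integrable hf.Lap_good ht
  have i2 := hf.integrable (hf.Lap_good.mul hf.Lap_good) ht
  have i3 := hf.integrable hf.Hsq_good ht
  have c1 : ∫ z, NIW.Lap f t z * heatSol n f t z = ∫ z, heatSol n f t z * NIW.Lap f t z := by
    simp only [mul_comm]
  rw [c1]
  set c := ∫ z, heatSol n f t z * NIW.Lap f t z with hc
  have v : ∫ x, (NIW.Lap f t x - c) ^ 2 * heatSol n f t x =
      (∫ x, heatSol n f t x * (NIW.Lap f t x * NIW.Lap f t x)) - c ^ 2 := by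
    have e : ∀ x, (NIW.Lap f t x - c) ^ 2 * heatSol n f t x =
        heatSol n f t x * (NIW.Lap f t x * NIW.Lap f t x)
          - (2 * c * (heatSol n f t x * NIW.Lap f t x) - c ^ 2 * heatSol n f t x) := fun x => by ring
    simp only [e]
    have i4 : Integrable (fun x => 2 * c * (heatSol n f t x * NIW.Lap f t x)
        - c ^ 2 * heatSol n f t x) := (i1.const_mul _).sub (i0.const_mul _)
    rw [integral_sub i2 i4,
      integral_sub (i1.const_mul _) (i0.const_mul _), integral_const_mul, integral_const_mul,
      hf.integral_heat ht, ← hc]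
    ring
  have w : ∫ x, (NIW.Hsq f t x - 1 / (n : ℝ) * (NIW.Lap f t x * NIW.Lap f t x)) * heatSol n f t x =
      (∫ x, heatSol n f t x * NIW.Hsq f t x)
        - 1 / (n : ℝ) * ∫ x, heatSol n f t x * (NIW.Lap f t x * NIW.Lap f t x) := by
    have e : ∀ x, (NIW.Hsq f t x - 1 / (n : ℝ) * (NIW.Lap f t x * NIW.Lap f t x)) * heatSol n f t x =
        heatSol n f t x * NIW.Hsq f t x
          - 1 / (n : ℝ) * (heatSol n f t x * (NIW.Lap f t x * NIW.Lap f t x)) := fun x => by ring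
    simp only [e]
    rw [integral_sub i3 (i2.const_mul _), integral_const_mul]
  rw [v, w]
  ring
end

section
/- Let n ≥ 1 and let f : ℝⁿ → ℝ be a nonnegative, continuous, compactly supported function with ∫_{ℝⁿ} f dx = 1 and f not identically zero, and let u(t,x) = ∫_{ℝⁿ} (4πt)^{-n/2} exp(-‖x-y‖²/(4t)) f(y) dy. Then the Li–Yau differential Harnack inequality holds: for every t > 0 and x ∈ ℝⁿ, |∇u(t,x)|²/u(t,x)² - ∂_t u(t,x)/u(t,x) ≤ n/(2t); equivalently, Δ log u(t,x) ≥ -n/(2t). -/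
open Real MeasureTheory

/-- Differentiation under the integral against a compactly supported continuous function. -/
lemma ly_hasFDerivAt_integral {n : ℕ} {H V : Type*} [NormedAddCommGroup H] [NormedSpace ℝ H]
    [ProperSpace H] [NormedAddCommGroup V] [NormedSpace ℝ V]
    (f : EuclideanSpace ℝ (Fin n) → ℝ) (hf : Continuous f) (hs : HasCompactSupport f)
    (U : Set H) (hU : IsOpen U) (x₀ : H) (hx₀ : x₀ ∈ U)
    (G : H → EuclideanSpace ℝ (Fin n) → V) (G' : H → EuclideanSpace ℝ (Fin n) → H →L[ℝ] V)
    (hG : ∀ x ∈ U, Continuous (G x))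
    (hG' : ContinuousOn (Function.uncurry G') (U ×ˢ Set.univ))
    (hd : ∀ x ∈ U, ∀ y, HasFDerivAt (fun z => G z y) (G' x y) x) :
    HasFDerivAt (fun x => ∫ y, f y • G x y) (∫ y, f y • G' x₀ y) x₀ := by
  obtain ⟨ε, hε, hεU⟩ := Metric.nhds_basis_closedBall.mem_iff.1 (hU.mem_nhds hx₀)
  have hcpt : IsCompact (Metric.closedBall x₀ ε ×ˢ tsupport f) :=
    (isCompact_closedBall x₀ ε).prod hs
  obtain ⟨C, hC⟩ := hcpt.exists_bound_of_continuousOn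
    (hG'.mono (Set.prod_mono hεU (Set.subset_univ _)))
  have hcont : ∀ x ∈ U, Continuous (G' x) := by
    intro x hx
    rw [← continuousOn_univ]
    exact hG'.comp (f := fun y => (x, y)) (by fun_prop) (fun y _ => ⟨hx, trivial⟩)
  refine hasFDerivAt_integral_of_dominated_of_fderiv_le (s := Metric.closedBall x₀ ε)
    (F := fun x y => f y • G x y) (F' := fun x y => f y • G' x y)
    (bound := fun y => ‖f y‖ * C) (Metric.closedBall_mem_nhds x₀ hε) ?_ ?_ ?_ ?_ ?_ ?_
  · filter_upwards [hU.mem_nhds hx₀] with x hx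
    exact ((hf.smul (hG x hx)).aestronglyMeasurable)
  · exact (hf.smul (hG x₀ hx₀)).integrable_of_hasCompactSupport hs.smul_right
  · exact (hf.smul (hcont x₀ hx₀)).aestronglyMeasurable
  · refine Filter.Eventually.of_forall fun y x hx => ?_
    by_cases hy : y ∈ tsupport f
    · rw [norm_smul]
      exact mul_le_mul_of_nonneg_left (hC (x, y) ⟨hx, hy⟩) (norm_nonneg _)
    · simp [image_eq_zero_of_notMem_tsupport hy]
  · exact (hf.norm.integrable_of_hasCompactSupport hs.norm).mul_const C
  · refine Filter.Eventually.of_forall fun y x hx => ?_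
    exact (hd x (hεU hx) y).const_smul (f y)

/-- One-dimensional version. -/
lemma ly_hasDerivAt_integral {n : ℕ}
    (f : EuclideanSpace ℝ (Fin n) → ℝ) (hf : Continuous f) (hs : HasCompactSupport f)
    (U : Set ℝ) (hU : IsOpen U) (x₀ : ℝ) (hx₀ : x₀ ∈ U)
    (G G' : ℝ → EuclideanSpace ℝ (Fin n) → ℝ)
    (hG : ∀ x ∈ U, Continuous (G x))
    (hG' : ContinuousOn (Function.uncurry G') (U ×ˢ Set.univ))
    (hd : ∀ x ∈ U, ∀ y, HasDerivAt (fun z => G z y) (G' x y) x) :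
    HasDerivAt (fun x => ∫ y, f y • G x y) (∫ y, f y • G' x₀ y) x₀ := by
  have hc0 : Continuous (G' x₀) := by
    rw [← continuousOn_univ]
    exact hG'.comp (f := fun y => (x₀, y)) (by fun_prop) (fun y _ => ⟨hx₀, trivial⟩)
  have hL : Continuous (fun a : ℝ => ContinuousLinearMap.toSpanSingleton ℝ a) :=
    (ContinuousLinearMap.toSpanSingletonCLE (𝕜 := ℝ) (E := ℝ)).continuous
  have hc : ContinuousOn (Function.uncurry
      (fun x y => ContinuousLinearMap.toSpanSingleton ℝ (G' x y))) (U ×ˢ Set.univ) :=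
    hL.comp_continuousOn hG'
  have h := ly_hasFDerivAt_integral f hf hs U hU x₀ hx₀ G
    (fun x y => ContinuousLinearMap.toSpanSingleton ℝ (G' x y)) hG hc
    (fun x hx y => (hd x hx y).hasFDerivAt)
  refine h.hasDerivAt.congr_deriv ?_
  rw [ContinuousLinearMap.integral_apply]
  · simp
  · exact (hf.smul (hL.comp hc0)).integrable_of_hasCompactSupport hs.smul_right

/-- `C²` smoothness of the parametric integral. -/
lemma ly_contDiff_two {n : ℕ}
    (f : EuclideanSpace ℝ (Fin n) → ℝ) (hf : Continuous f) (hs : HasCompactSupport f)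
    (G : EuclideanSpace ℝ (Fin n) → EuclideanSpace ℝ (Fin n) → ℝ)
    (hG : ContDiff ℝ 3 (Function.uncurry G)) :
    ContDiff ℝ 2 (fun x => ∫ y, f y • G x y) := by
  have step : ∀ {V : Type} [NormedAddCommGroup V] [NormedSpace ℝ V]
      (F : EuclideanSpace ℝ (Fin n) → EuclideanSpace ℝ (Fin n) → V)
      (_ : ContDiff ℝ 1 (Function.uncurry F)) (x : EuclideanSpace ℝ (Fin n)),
      HasFDerivAt (fun x => ∫ y, f y • F x y)
        (∫ y, f y • fderiv ℝ (fun z => F z y) x) x := by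
    intro V _ _ F hF x
    have hc : ContDiff ℝ 0 (fun p : EuclideanSpace ℝ (Fin n) × EuclideanSpace ℝ (Fin n) =>
        fderiv ℝ (fun z => F z p.2) p.1) := by
      refine ContDiff.fderiv (f := fun (p : EuclideanSpace ℝ (Fin n) × EuclideanSpace ℝ (Fin n)) z => F z p.2) (m := 1) ?_ contDiff_fst (by norm_num)
      exact hF.comp (contDiff_snd.prodMk (contDiff_snd.comp contDiff_fst))
    refine ly_hasFDerivAt_integral f hf hs Set.univ isOpen_univ x trivial F
      (fun x y => fderiv ℝ (fun z => F z y) x) ?_ ?_ ?_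
    · intro x _
      exact hF.continuous.comp (by fun_prop : Continuous fun y => (x, y))
    · exact hc.continuous.continuousOn
    · intro x _ y
      have : Differentiable ℝ (fun z => F z y) :=
        (hF.comp (contDiff_id.prodMk contDiff_const) :
          ContDiff ℝ 1 (fun z => F z y)).differentiable (by norm_num)
      exact (this x).hasFDerivAt
  have stepC : ∀ {V : Type} [NormedAddCommGroup V] [NormedSpace ℝ V]
      (F : EuclideanSpace ℝ (Fin n) → EuclideanSpace ℝ (Fin n) → V) (m k : ℕ∞) (_ : m + 1 ≤ k)
      (_ : ContDiff ℝ k (Function.uncurry F)),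
      ContDiff ℝ m (Function.uncurry fun x y => fderiv ℝ (fun z => F z y) x) := by
    intro V _ _ F m k hmk hF
    refine ContDiff.fderiv (f := fun (p : EuclideanSpace ℝ (Fin n) × EuclideanSpace ℝ (Fin n)) z => F z p.2) (m := k) ?_ contDiff_fst (by exact_mod_cast hmk)
    exact hF.comp (contDiff_snd.prodMk (contDiff_snd.comp contDiff_fst))
  have h1 := stepC G 2 3 (by norm_num) hG
  have h2 := stepC _ 1 2 (by norm_num) h1
  rw [show (2 : WithTop ℕ∞) = (1 : ℕ) + 1 by norm_num, contDiff_succ_iff_hasFDerivAt]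
  · refine ⟨_, ?_, fun x => step G (hG.of_le (by norm_num)) x⟩
    rw [Nat.cast_one, contDiff_one_iff_hasFDerivAt]
    refine ⟨_, ?_, fun x => step _ (h1.of_le (by norm_num)) x⟩
    rw [continuous_iff_continuousAt]
    exact fun x => (step _ h2 x).continuousAt

lemma ly_kernel_contDiff (n : ℕ) (t : ℝ) :
    ContDiff ℝ 3 (Function.uncurry fun x y : EuclideanSpace ℝ (Fin n) =>
      Real.exp (-‖x - y‖ ^ 2 / (4 * t))) := by
  have : ContDiff ℝ 3 (fun p : EuclideanSpace ℝ (Fin n) × EuclideanSpace ℝ (Fin n) =>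
      ‖p.1 - p.2‖ ^ 2) := (contDiff_fst.sub contDiff_snd).norm_sq ℝ
  exact (this.neg.div_const _).exp

/-- Derivative of the kernel along a line. -/
lemma ly_kernel_line {n : ℕ} (t : ℝ) (ht : 0 < t) (x y e : EuclideanSpace ℝ (Fin n)) (s : ℝ) :
    HasDerivAt (fun s : ℝ => Real.exp (-‖x + s • e - y‖ ^ 2 / (4 * t)))
      ((-(inner ℝ (x + s • e - y) e) / (2 * t)) * Real.exp (-‖x + s • e - y‖ ^ 2 / (4 * t))) s := by
  have h1 : HasDerivAt (fun s : ℝ => x + s • e - y) e s := by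
    simpa using (((hasDerivAt_id s).smul_const e).const_add x).sub_const y
  refine ((h1.norm_sq.neg).div_const (4 * t)).exp.congr_deriv ?_
  simp only [Pi.neg_apply]
  field_simp
  ring

lemma ly_inner_line {n : ℕ} (t : ℝ) (x y e : EuclideanSpace ℝ (Fin n)) (he : ‖e‖ = 1) (s : ℝ) :
    HasDerivAt (fun s : ℝ => -(inner ℝ (x + s • e - y) e) / (2 * t)) (-(1 / (2 * t))) s := by
  have h1 : HasDerivAt (fun s : ℝ => x + s • e - y) e s := by
    simpa using (((hasDerivAt_id s).smul_const e).const_add x).sub_const y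
  refine (((h1.inner ℝ (hasDerivAt_const s e)).neg).div_const (2 * t)).congr_deriv ?_
  simp [he, neg_div]

/-- Cauchy–Schwarz (variance nonnegativity). -/
lemma ly_cauchy {n : ℕ} (w a : EuclideanSpace ℝ (Fin n) → ℝ) (hw : ∀ y, 0 ≤ w y)
    (h0 : Integrable w) (h1 : Integrable fun y => a y * w y)
    (h2 : Integrable fun y => a y ^ 2 * w y) (hpos : 0 < ∫ y, w y) :
    (∫ y, a y * w y) ^ 2 ≤ (∫ y, w y) * ∫ y, a y ^ 2 * w y := by
  set A := ∫ y, w y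
  set B := ∫ y, a y * w y with hB
  set C := ∫ y, a y ^ 2 * w y with hC
  have key : 0 ≤ ∫ y, (A * a y - B) ^ 2 * w y :=
    integral_nonneg fun y => mul_nonneg (sq_nonneg _) (hw y)
  have e : (∫ y, (A * a y - B) ^ 2 * w y) = A ^ 2 * C - 2 * A * B * B + B ^ 2 * A := by
    have e1 : (∫ y, (A * a y - B) ^ 2 * w y) = ∫ y, (A ^ 2 * (a y ^ 2 * w y)
        - (2 * A * B) * (a y * w y) + B ^ 2 * w y) := by
      congr 1
      ext y
      ring
    rw [e1, integral_add (f := fun y => A ^ 2 * (a y ^ 2 * w y) - (2 * A * B) * (a y * w y))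
        ((h2.const_mul _).sub (h1.const_mul _)) (h0.const_mul _),
      integral_sub (h2.const_mul _) (h1.const_mul _), integral_const_mul, integral_const_mul,
      integral_const_mul]
  rw [e] at key
  have : 0 ≤ A * (A * C - B ^ 2) := by nlinarith
  have := nonneg_of_mul_nonneg_right this hpos
  linarith

lemma ly_first {n : ℕ} (f : EuclideanSpace ℝ (Fin n) → ℝ) (hf : Continuous f)
    (hs : HasCompactSupport f) (t : ℝ) (ht : 0 < t) (x e : EuclideanSpace ℝ (Fin n)) (s : ℝ) :
    HasDerivAt (fun s : ℝ => ∫ y, f y • Real.exp (-‖x + s • e - y‖ ^ 2 / (4 * t)))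
      (∫ y, f y • ((-(inner ℝ (x + s • e - y) e) / (2 * t)) *
        Real.exp (-‖x + s • e - y‖ ^ 2 / (4 * t)))) s := by
  refine ly_hasDerivAt_integral f hf hs Set.univ isOpen_univ s trivial
    (fun s y => Real.exp (-‖x + s • e - y‖ ^ 2 / (4 * t)))
    (fun s y => (-(inner ℝ (x + s • e - y) e) / (2 * t)) *
        Real.exp (-‖x + s • e - y‖ ^ 2 / (4 * t))) ?_ ?_ ?_
  · intro s _
    fun_prop
  · apply Continuous.continuousOn
    unfold Function.uncurry
    fun_prop
  · intro s _ y
    exact ly_kernel_line t ht x y e s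

lemma ly_second {n : ℕ} (f : EuclideanSpace ℝ (Fin n) → ℝ) (hf : Continuous f)
    (hs : HasCompactSupport f) (t : ℝ) (ht : 0 < t) (x e : EuclideanSpace ℝ (Fin n))
    (he : ‖e‖ = 1) (s : ℝ) :
    HasDerivAt (fun s : ℝ => ∫ y, f y • ((-(inner ℝ (x + s • e - y) e) / (2 * t)) *
        Real.exp (-‖x + s • e - y‖ ^ 2 / (4 * t))))
      (∫ y, f y • (((-(inner ℝ (x + s • e - y) e) / (2 * t)) ^ 2 - 1 / (2 * t)) *
        Real.exp (-‖x + s • e - y‖ ^ 2 / (4 * t)))) s := by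
  refine ly_hasDerivAt_integral f hf hs Set.univ isOpen_univ s trivial
    (fun s y => (-(inner ℝ (x + s • e - y) e) / (2 * t)) *
        Real.exp (-‖x + s • e - y‖ ^ 2 / (4 * t)))
    (fun s y => ((-(inner ℝ (x + s • e - y) e) / (2 * t)) ^ 2 - 1 / (2 * t)) *
        Real.exp (-‖x + s • e - y‖ ^ 2 / (4 * t))) ?_ ?_ ?_
  · intro s _
    fun_prop
  · apply Continuous.continuousOn
    unfold Function.uncurry
    fun_prop
  · intro s _ y
    refine ((ly_inner_line t x y e he s).mul (ly_kernel_line t ht x y e s)).congr_deriv ?_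
    ring

lemma ly_time {n : ℕ} (f : EuclideanSpace ℝ (Fin n) → ℝ) (hf : Continuous f)
    (hs : HasCompactSupport f) (t : ℝ) (ht : 0 < t) (x : EuclideanSpace ℝ (Fin n)) :
    HasDerivAt (fun s : ℝ => ∫ y, f y • Real.exp (-‖x - y‖ ^ 2 / (4 * s)))
      (∫ y, f y • (‖x - y‖ ^ 2 / (4 * t ^ 2) * Real.exp (-‖x - y‖ ^ 2 / (4 * t)))) t := by
  refine ly_hasDerivAt_integral f hf hs (Set.Ioi 0) isOpen_Ioi t ht
    (fun s y => Real.exp (-‖x - y‖ ^ 2 / (4 * s)))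
    (fun s y => ‖x - y‖ ^ 2 / (4 * s ^ 2) * Real.exp (-‖x - y‖ ^ 2 / (4 * s))) ?_ ?_ ?_
  · intro s _
    fun_prop
  · unfold Function.uncurry
    have hne : ∀ p ∈ Set.Ioi (0 : ℝ) ×ˢ (Set.univ : Set (EuclideanSpace ℝ (Fin n))),
        p.1 ≠ 0 := fun p hp => ne_of_gt hp.1
    refine ContinuousOn.mul (ContinuousOn.div (by fun_prop) (by fun_prop) ?_)
      (ContinuousOn.rexp (ContinuousOn.div (by fun_prop) (by fun_prop) ?_))
    · intro p hp
      have := hne p hp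
      positivity
    · intro p hp
      have := hne p hp
      positivity
  · intro s hs y
    have hs0 : s ≠ 0 := ne_of_gt hs
    have h1 : HasDerivAt (fun s : ℝ => 4 * s) 4 s := by
      simpa using (hasDerivAt_id s).const_mul (4 : ℝ)
    refine ((hasDerivAt_const s (-‖x - y‖ ^ 2)).div h1 (by positivity)).exp.congr_deriv ?_
    simp only [Pi.div_apply]
    field_simp
    ring

lemma ly_heatSol_eq {n : ℕ} (f : EuclideanSpace ℝ (Fin n) → ℝ) (t : ℝ)
    (x : EuclideanSpace ℝ (Fin n)) :
    heatSol n f t x = (4 * π * t) ^ (-(n : ℝ) / 2) *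
      ∫ y, f y • Real.exp (-‖x - y‖ ^ 2 / (4 * t)) := by
  unfold heatSol
  rw [← integral_const_mul]
  congr 1
  ext y
  simp only [smul_eq_mul]
  ring

lemma ly_fderiv {n : ℕ} (f : EuclideanSpace ℝ (Fin n) → ℝ) (hf : Continuous f)
    (hs : HasCompactSupport f) (t : ℝ) (ht : 0 < t) (x e : EuclideanSpace ℝ (Fin n)) :
    fderiv ℝ (fun x => ∫ y, f y • Real.exp (-‖x - y‖ ^ 2 / (4 * t))) x e =
      ∫ y, f y • ((-(inner ℝ (x - y) e) / (2 * t)) * Real.exp (-‖x - y‖ ^ 2 / (4 * t))) := by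
  have hC := ly_contDiff_two f hf hs _ (ly_kernel_contDiff n t)
  have hd := (hC.differentiable (by norm_num)) (x + (0 : ℝ) • e)
  have h1 : HasDerivAt (fun s : ℝ => x + s • e) e 0 := by
    simpa using ((hasDerivAt_id (0 : ℝ)).smul_const e).const_add x
  have h2 := hd.hasFDerivAt.comp_hasDerivAt (0 : ℝ) h1
  have h3 := h2.unique (ly_first f hf hs t ht x e 0)
  simpa using h3

lemma ly_pos {n : ℕ} (f : EuclideanSpace ℝ (Fin n) → ℝ) (hf : Continuous f)
    (hs : HasCompactSupport f) (hnn : ∀ x, 0 ≤ f x) (hne : f ≠ 0) (t : ℝ)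
    (x : EuclideanSpace ℝ (Fin n)) :
    0 < ∫ y, f y • Real.exp (-‖x - y‖ ^ 2 / (4 * t)) := by
  obtain ⟨y₀, hy₀⟩ := Function.ne_iff.1 hne
  refine Continuous.integral_pos_of_hasCompactSupport_nonneg_nonzero (x := y₀) (by fun_prop)
    hs.smul_right ?_ ?_
  · intro y
    exact mul_nonneg (hnn y) (Real.exp_pos _).le
  · exact mul_ne_zero hy₀ (Real.exp_pos _).ne'

lemma ly_cs {n : ℕ} (f : EuclideanSpace ℝ (Fin n) → ℝ) (hf : Continuous f)
    (hs : HasCompactSupport f) (hnn : ∀ x, 0 ≤ f x) (hne : f ≠ 0) (t : ℝ)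
    (x e : EuclideanSpace ℝ (Fin n)) :
    (∫ y, f y • ((-(inner ℝ (x - y) e) / (2 * t)) * Real.exp (-‖x - y‖ ^ 2 / (4 * t)))) ^ 2 ≤
    (∫ y, f y • Real.exp (-‖x - y‖ ^ 2 / (4 * t))) *
    ∫ y, f y • ((-(inner ℝ (x - y) e) / (2 * t)) ^ 2 * Real.exp (-‖x - y‖ ^ 2 / (4 * t))) := by
  have h := ly_cauchy (fun y => f y • Real.exp (-‖x - y‖ ^ 2 / (4 * t)))
    (fun y => -(inner ℝ (x - y) e) / (2 * t))
    (fun y => mul_nonneg (hnn y) (Real.exp_pos _).le)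
    (Continuous.integrable_of_hasCompactSupport (by fun_prop) hs.smul_right)
    (Continuous.integrable_of_hasCompactSupport (by fun_prop) (hs.smul_right.mul_left))
    (Continuous.integrable_of_hasCompactSupport (by fun_prop) (hs.smul_right.mul_left))
    (ly_pos f hf hs hnn hne t x)
  simp only [smul_eq_mul] at h ⊢
  simp only [mul_left_comm (f _)]
  exact h

lemma ly_alg (A B M r : ℝ) (hA : 0 < A) (h : B ^ 2 ≤ A * M) :
    -r ≤ ((M - r * A) * A - B * B) / A ^ 2 := by
  rw [le_div_iff₀ (by positivity)]
  linarith

set_option maxHeartbeats 2000000 in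
/-- Lower bound on the second derivative of `log u` in a unit direction. -/
lemma ly_hess {n : ℕ} (f : EuclideanSpace ℝ (Fin n) → ℝ) (hf : Continuous f)
    (hs : HasCompactSupport f) (hnn : ∀ x, 0 ≤ f x) (hne : f ≠ 0) (t : ℝ) (ht : 0 < t)
    (x e : EuclideanSpace ℝ (Fin n)) (he : ‖e‖ = 1) :
    -(1 / (2 * t)) ≤ iteratedFDeriv ℝ 2 (fun y => Real.log (heatSol n f t y)) x ![e, e] := by
  set I0 : EuclideanSpace ℝ (Fin n) → ℝ :=
    fun x => ∫ y, f y • Real.exp (-‖x - y‖ ^ 2 / (4 * t)) with hI0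
  have hcp : 0 < (4 * π * t) ^ (-(n : ℝ) / 2) := by positivity
  have hpos : ∀ z, 0 < I0 z := ly_pos f hf hs hnn hne t
  have hC : ContDiff ℝ 2 I0 := ly_contDiff_two f hf hs _ (ly_kernel_contDiff n t)
  have hg : (fun y => Real.log (heatSol n f t y)) =
      fun y => Real.log ((4 * π * t) ^ (-(n : ℝ) / 2)) + Real.log (I0 y) := by
    ext y
    rw [ly_heatSol_eq, Real.log_mul hcp.ne' (hpos y).ne']
  rw [hg]
  set g := fun y => Real.log ((4 * π * t) ^ (-(n : ℝ) / 2)) + Real.log (I0 y) with hgdef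
  have hgC : ContDiff ℝ 2 g := contDiff_const.add (hC.log fun z => (hpos z).ne')
  rw [iteratedFDeriv_two_apply]
  simp only [Matrix.cons_val_zero, Matrix.cons_val_one]
  have hfd : ∀ z, fderiv ℝ g z e = (∫ y, f y • ((-(inner ℝ (z - y) e) / (2 * t)) *
      Real.exp (-‖z - y‖ ^ 2 / (4 * t)))) / I0 z := by
    intro z
    have hd := ((hC.differentiable (by norm_num)) z).hasFDerivAt
    rw [((hd.log (hpos z).ne').const_add _).fderiv, ← ly_fderiv f hf hs t ht z e]
    simp [div_eq_inv_mul, hI0]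
  have hdd : DifferentiableAt ℝ (fderiv ℝ g) (x + (0 : ℝ) • e) :=
    (hgC.fderiv_right (m := 1) (by norm_num)).differentiable (by norm_num) _
  have h1 : HasDerivAt (fun s : ℝ => x + s • e) e 0 := by
    simpa using ((hasDerivAt_id (0 : ℝ)).smul_const e).const_add x
  have h2 := (hdd.hasFDerivAt.comp_hasDerivAt (0 : ℝ) h1).clm_apply (hasDerivAt_const (0 : ℝ) e)
  have h3 := (ly_second f hf hs t ht x e he 0).div (ly_first f hf hs t ht x e 0)
    (hpos (x + (0 : ℝ) • e)).ne'
  have heq : (fun s : ℝ => ((fderiv ℝ g) ∘ (fun s : ℝ => x + s • e)) s e) = fun s : ℝ =>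
      (∫ y, f y • ((-(inner ℝ (x + s • e - y) e) / (2 * t)) *
        Real.exp (-‖x + s • e - y‖ ^ 2 / (4 * t)))) /
      (∫ y, f y • Real.exp (-‖x + s • e - y‖ ^ 2 / (4 * t))) := by
    ext s
    exact hfd _
  rw [heq] at h2
  have h4 := h2.unique h3
  simp only [zero_smul, add_zero, map_zero] at h4
  rw [h4]
  have hcs := ly_cs f hf hs hnn hne t x e
  have hsplit : (∫ y, f y • (((-(inner ℝ (x - y) e) / (2 * t)) ^ 2 - 1 / (2 * t)) *
        Real.exp (-‖x - y‖ ^ 2 / (4 * t)))) =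
      (∫ y, f y • ((-(inner ℝ (x - y) e) / (2 * t)) ^ 2 * Real.exp (-‖x - y‖ ^ 2 / (4 * t))))
      - 1 / (2 * t) * ∫ y, f y • Real.exp (-‖x - y‖ ^ 2 / (4 * t)) := by
    rw [← integral_const_mul, ← integral_sub]
    · congr 1
      ext y
      simp only [smul_eq_mul]
      ring
    · exact Continuous.integrable_of_hasCompactSupport (by fun_prop) hs.smul_right
    · exact (Continuous.integrable_of_hasCompactSupport (by fun_prop) hs.smul_right).const_mul _
  rw [hsplit]
  exact ly_alg _ _ _ _ (ly_pos f hf hs hnn hne t x) hcs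

lemma ly_const_deriv (n : ℕ) (t : ℝ) (ht : 0 < t) :
    HasDerivAt (fun s : ℝ => (4 * π * s) ^ (-(n : ℝ) / 2))
      (-(n : ℝ) / (2 * t) * (4 * π * t) ^ (-(n : ℝ) / 2)) t := by
  have h1 : HasDerivAt (fun s : ℝ => 4 * π * s) (4 * π) t := by
    simpa using (hasDerivAt_id t).const_mul (4 * π)
  have hp : 0 < 4 * π * t := by positivity
  refine (h1.rpow_const (p := -(n : ℝ) / 2) (Or.inl hp.ne')).congr_deriv ?_
  rw [Real.rpow_sub_one hp.ne']
  field_simp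

/-- The Li–Yau differential Harnack inequality on `ℝⁿ`:
`|∇u|²/u² - ∂ₜu/u ≤ n/(2t)`, equivalently `Δ log u ≥ -n/(2t)`. -/
theorem li_yau_harnack (n : ℕ) (hn : 1 ≤ n)
    (f : EuclideanSpace ℝ (Fin n) → ℝ)
    (hf_cont : Continuous f) (hf_nonneg : ∀ x, 0 ≤ f x)
    (hf_supp : HasCompactSupport f)
    (hf_int : ∫ x, f x = 1) (hf_ne : f ≠ 0) :
    ∀ t : ℝ, 0 < t → ∀ x : EuclideanSpace ℝ (Fin n),
      (‖gradient (fun y => heatSol n f t y) x‖ ^ 2 / (heatSol n f t x) ^ 2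
        - deriv (fun s => heatSol n f s x) t / heatSol n f t x ≤ (n : ℝ) / (2 * t)) ∧
      (-(n : ℝ) / (2 * t) ≤ laplacian n (fun y => Real.log (heatSol n f t y)) x) := by
  intro t ht x
  constructor
  · have hcp : 0 < (4 * π * t) ^ (-(n : ℝ) / 2) := by positivity
    have hpos := ly_pos f hf_cont hf_supp hf_nonneg hf_ne t x
    have hC := ly_contDiff_two f hf_cont hf_supp _ (ly_kernel_contDiff n t)
    have hgrad : ∀ i, gradient (fun y => heatSol n f t y) x i = (4 * π * t) ^ (-(n : ℝ) / 2) *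
        ∫ y, f y • ((-(inner ℝ (x - y) (EuclideanSpace.single i (1 : ℝ))) / (2 * t)) *
          Real.exp (-‖x - y‖ ^ 2 / (4 * t))) := by
      intro i
      have e1 : gradient (fun y => heatSol n f t y) x i =
          inner ℝ (gradient (fun y => heatSol n f t y) x) (EuclideanSpace.single i (1 : ℝ)) := by
        rw [EuclideanSpace.inner_single_right]
        simp
      rw [e1, gradient, InnerProductSpace.toDual_symm_apply,
        ← ly_fderiv f hf_cont hf_supp t ht x]
      simp only [ly_heatSol_eq]
      rw [fderiv_const_mul ((hC.differentiable (by norm_num)) x)]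
      rfl
    have htime : deriv (fun s => heatSol n f s x) t =
        -(n : ℝ) / (2 * t) * (4 * π * t) ^ (-(n : ℝ) / 2) *
          (∫ y, f y • Real.exp (-‖x - y‖ ^ 2 / (4 * t))) + (4 * π * t) ^ (-(n : ℝ) / 2) *
          ∫ y, f y • (‖x - y‖ ^ 2 / (4 * t ^ 2) * Real.exp (-‖x - y‖ ^ 2 / (4 * t))) := by
      simp only [ly_heatSol_eq]
      exact ((ly_const_deriv n t ht).mul (ly_time f hf_cont hf_supp t ht x)).deriv
    have hsum : (∫ y, f y • (‖x - y‖ ^ 2 / (4 * t ^ 2) * Real.exp (-‖x - y‖ ^ 2 / (4 * t)))) =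
        ∑ i, ∫ y, f y • ((-(inner ℝ (x - y) (EuclideanSpace.single i (1 : ℝ))) / (2 * t)) ^ 2 *
          Real.exp (-‖x - y‖ ^ 2 / (4 * t))) := by
      rw [← integral_finsetSum]
      · congr 1
        ext y
        simp only [smul_eq_mul]
        rw [← Finset.mul_sum, ← Finset.sum_mul]
        congr 2
        rw [EuclideanSpace.norm_sq_eq, Finset.sum_div]
        refine Finset.sum_congr rfl fun i _ => ?_
        simp only [EuclideanSpace.inner_single_right, Real.norm_eq_abs, sq_abs]
        simp
        ring
      · intro i _
        exact Continuous.integrable_of_hasCompactSupport (by fun_prop) hf_supp.smul_right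
    rw [htime, hsum, EuclideanSpace.norm_sq_eq, ly_heatSol_eq]
    have hle : ∑ i, ‖gradient (fun y => heatSol n f t y) x i‖ ^ 2 ≤
        ((4 * π * t) ^ (-(n : ℝ) / 2)) ^ 2 *
        ((∫ y, f y • Real.exp (-‖x - y‖ ^ 2 / (4 * t))) *
        ∑ i, ∫ y, f y • ((-(inner ℝ (x - y) (EuclideanSpace.single i (1 : ℝ))) / (2 * t)) ^ 2 *
          Real.exp (-‖x - y‖ ^ 2 / (4 * t)))) := by
      rw [Finset.mul_sum, Finset.mul_sum]
      refine Finset.sum_le_sum fun i _ => ?_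
      rw [Real.norm_eq_abs, sq_abs, hgrad i, mul_pow]
      exact mul_le_mul_of_nonneg_left
        (ly_cs f hf_cont hf_supp hf_nonneg hf_ne t x _) (sq_nonneg _)
    generalize (∑ i, ‖gradient (fun y => heatSol n f t y) x i‖ ^ 2) = A at *
    generalize (4 * π * t) ^ (-(n : ℝ) / 2) = c at *
    generalize (∫ y, f y • Real.exp (-‖x - y‖ ^ 2 / (4 * t))) = I at *
    generalize (∑ i, ∫ y, f y • ((-(inner ℝ (x - y) (EuclideanSpace.single i (1 : ℝ))) /
      (2 * t)) ^ 2 * Real.exp (-‖x - y‖ ^ 2 / (4 * t)))) = M at *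
    have h1 : A / (c * I) ^ 2 ≤ M / I := by
      rw [div_le_div_iff₀ (by positivity) hpos]
      calc A * I ≤ c ^ 2 * (I * M) * I := mul_le_mul_of_nonneg_right hle hpos.le
        _ = M * (c * I) ^ 2 := by ring
    have h2 : (-(n : ℝ) / (2 * t) * c * I + c * M) / (c * I) = -(n : ℝ) / (2 * t) + M / I := by
      field_simp
    rw [h2, neg_div]
    linarith
  · unfold laplacian hessianMatrix
    have : ∑ i : Fin n, (-(1 / (2 * t))) ≤ ∑ i : Fin n, iteratedFDeriv ℝ 2
        (fun y => Real.log (heatSol n f t y)) x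
        ![EuclideanSpace.single i 1, EuclideanSpace.single i 1] :=
      Finset.sum_le_sum fun i _ => ly_hess f hf_cont hf_supp hf_nonneg hf_ne t ht x _ (by simp)
    refine le_trans (le_of_eq ?_) this
    simp
    ring
end
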